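/- Let n ∈ ℕ, p⃗, q⃗ = (q_1,…,q_n) ∈ (1,∞)^n and α⃗ = (α_1,…,α_n) ∈ ℝⁿ with α_i ∈ (-1/q_i, 1 - 1/q_i) for every i ∈ {1,…,n}. Then there exists a positive constant C such that for every measurable f : ℝⁿ → ℂ, ‖M(f)‖_{Ė^{α⃗,p⃗}_{q⃗}(ℝⁿ)} ≤ C ‖f‖_{Ė^{α⃗,p⃗}_{q⃗}(ℝⁿ)}, where M is the centered Hardy–Littlewood maximal operator. -/

import Mathlib

open MeasureTheory ENNReal Filter

noncomputable section

/-- The dyadic annulus `R_k = (-2^k, 2^k) \ (-2^(k-1), 2^(k-1))` in `ℝ`. -/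
def herzRing (k : ℤ) : Set ℝ :=
  Set.Ioo (-(2 : ℝ) ^ k) ((2 : ℝ) ^ k) \ Set.Ioo (-(2 : ℝ) ^ (k - 1)) ((2 : ℝ) ^ (k - 1))

/-- The `L^q` "norm" (valued in `ℝ≥0∞`) of an `ℝ≥0∞`-valued function on a set `s ⊆ ℝ`,
with the usual modification when `q = ∞`. -/
def lqNormOn (q : ℝ≥0∞) (s : Set ℝ) (g : ℝ → ℝ≥0∞) : ℝ≥0∞ :=
  if q = ∞ then essSup (s.indicator g) volume
  else (∫⁻ x in s, g x ^ q.toReal) ^ (1 / q.toReal)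

/-- The `l^p` norm over `ℤ` of an `ℝ≥0∞`-valued sequence, with the usual modification
when `p = ∞`. -/
def lpZNorm (p : ℝ≥0∞) (a : ℤ → ℝ≥0∞) : ℝ≥0∞ :=
  if p = ∞ then ⨆ k, a k
  else (∑' k : ℤ, a k ^ p.toReal) ^ (1 / p.toReal)

/-- The one-dimensional Herz norm `K^{α,p}_q` of an `ℝ≥0∞`-valued function on `ℝ`. -/
def herzNorm1 (α : ℝ) (p q : ℝ≥0∞) (g : ℝ → ℝ≥0∞) : ℝ≥0∞ :=
  lpZNorm p fun k => ENNReal.ofReal ((2 : ℝ) ^ ((k : ℝ) * α)) * lqNormOn q (herzRing k) g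

/-- The mixed-norm Herz norm on `ℝⁿ` of an `ℝ≥0∞`-valued function: the Herz norm
`K^{α_1,p_1}_{q_1}` is applied in the first variable, then `K^{α_2,p_2}_{q_2}` in the
second variable, …, and finally `K^{α_n,p_n}_{q_n}` in the last variable. -/
def mixedHerzNormE : (n : ℕ) → (Fin n → ℝ) → (Fin n → ℝ≥0∞) → (Fin n → ℝ≥0∞) →
    ((Fin n → ℝ) → ℝ≥0∞) → ℝ≥0∞
  | 0, _, _, _, f => f fun i => i.elim0
  | n + 1, α, p, q, f =>
    herzNorm1 (α (Fin.last n)) (p (Fin.last n)) (q (Fin.last n)) fun xlast =>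
      mixedHerzNormE n (Fin.init α) (Fin.init p) (Fin.init q) fun y => f (Fin.snoc y xlast)

/-- The mixed-norm Herz norm `‖f‖_{Ė^{α,p}_q(ℝⁿ)}` of a complex-valued function on `ℝⁿ`. -/
def herzNormC (n : ℕ) (α : Fin n → ℝ) (p q : Fin n → ℝ≥0∞) (f : (Fin n → ℝ) → ℂ) : ℝ≥0∞ :=
  mixedHerzNormE n α p q fun x => (‖f x‖₊ : ℝ≥0∞)

/-- `I_m = (-2^m, -2^{-m}] ∪ [2^{-m}, 2^m)`. -/
def herzI (m : ℕ) : Set ℝ :=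
  Set.Ioc (-(2 : ℝ) ^ (m : ℤ)) (-(2 : ℝ) ^ (-(m : ℤ))) ∪
    Set.Ico ((2 : ℝ) ^ (-(m : ℤ))) ((2 : ℝ) ^ (m : ℤ))

/-- `A_m = I_m^n ⊆ ℝⁿ`. -/
def herzA (n m : ℕ) : Set (Fin n → ℝ) := Set.univ.pi fun _ => herzI m

/-- The class `H(ℝⁿ)` of simple functions built from finitely many pairwise disjoint
parallelepipeds contained in some `A_m`. -/
def IsHSimple (n : ℕ) (f : (Fin n → ℝ) → ℂ) : Prop :=
  ∃ (m N : ℕ) (a : Fin N → ℂ) (E : Fin N → Fin n → Set ℝ),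
    (∀ k i, MeasurableSet (E k i)) ∧
    (∀ k, Set.univ.pi (E k) ⊆ herzA n m) ∧
    (Pairwise fun k l => Disjoint (Set.univ.pi (E k)) (Set.univ.pi (E l))) ∧
    f = fun x => ∑ k, (Set.univ.pi (E k)).indicator (fun _ => a k) x

/-- The Euclidean ball `B(x,r)` in `ℝⁿ`. -/
def eucBall (n : ℕ) (x : Fin n → ℝ) (r : ℝ) : Set (Fin n → ℝ) :=
  {y | ∑ i, (y i - x i) ^ 2 < r ^ 2}

/-- The (uncentered) maximal operator in the `k`-th variable. -/
def maxVar (n : ℕ) (k : Fin n) (g : (Fin n → ℝ) → ℝ≥0∞) : (Fin n → ℝ) → ℝ≥0∞ :=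
  fun x => ⨆ (a : ℝ) (b : ℝ) (_ : x k ∈ Set.Ioo a b),
    (volume (Set.Ioo a b))⁻¹ * ∫⁻ y in Set.Ioo a b, g (Function.update x k y)

/-- The centered Hardy–Littlewood maximal operator on `ℝⁿ`. -/
def centeredMax (n : ℕ) (g : (Fin n → ℝ) → ℝ≥0∞) : (Fin n → ℝ) → ℝ≥0∞ :=
  fun x => ⨆ (r : ℝ) (_ : 0 < r),
    (volume (eucBall n x r))⁻¹ * ∫⁻ y in eucBall n x r, g y

/-- The composition `M_n ∘ ⋯ ∘ M_1` of the maximal operators in each variable. -/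
def iteratedMax (n : ℕ) (g : (Fin n → ℝ) → ℝ≥0∞) : (Fin n → ℝ) → ℝ≥0∞ :=
  (List.ofFn fun k : Fin n => maxVar n k).foldl (fun h F => F h) g

/-- The iterated maximal operator `ℳ_t(f) = [M_n ⋯ M_1(|f|^t)]^{1/t}`. -/
def iterMaxPow (n : ℕ) (t : ℝ) (f : (Fin n → ℝ) → ℂ) : (Fin n → ℝ) → ℝ≥0∞ :=
  fun x => iteratedMax n (fun y => (‖f y‖₊ : ℝ≥0∞) ^ t) x ^ (1 / t)

/-- The `l^r`-Herz type mixed norm of a sequence of functions on `ℝⁿ`. -/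
def herzSeqNorm (n : ℕ) (r : ℝ≥0∞) (α : Fin n → ℝ) (p q : Fin n → ℝ≥0∞)
    (F : ℤ → (Fin n → ℝ) → ℂ) : ℝ≥0∞ :=
  mixedHerzNormE n α p q fun x => lpZNorm r fun j => (‖F j x‖₊ : ℝ≥0∞)

/-- `N` is a ball quasi-Banach function norm on (nonnegative extended-real-valued)
measurable functions on `ℝⁿ`. -/
def IsBQBFNorm (n : ℕ) (N : ((Fin n → ℝ) → ℝ≥0∞) → ℝ≥0∞) : Prop :=
  (∀ f : (Fin n → ℝ) → ℝ≥0∞, Measurable f → N f = 0 → f =ᵐ[volume] 0) ∧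
  (∀ f g : (Fin n → ℝ) → ℝ≥0∞, Measurable f → Measurable g →
    (∀ᵐ x ∂volume, g x ≤ f x) → N g ≤ N f) ∧
  (∀ (fm : ℕ → (Fin n → ℝ) → ℝ≥0∞) (f : (Fin n → ℝ) → ℝ≥0∞),
    (∀ m, Measurable (fm m)) → Measurable f →
    (∀ᵐ x ∂volume, Monotone (fun m => fm m x) ∧
      Tendsto (fun m => fm m x) atTop (nhds (f x))) →
    Monotone (fun m => N (fm m)) ∧ Tendsto (fun m => N (fm m)) atTop (nhds (N f))) ∧
  (∀ (x : Fin n → ℝ) (r : ℝ), 0 < r →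
    N ((eucBall n x r).indicator fun _ => (1 : ℝ≥0∞)) ≠ ∞)

/-- `N` is a ball Banach function norm: a ball quasi-Banach function norm that moreover
satisfies the triangle inequality and locally dominates the `L¹` norm. -/
def IsBallBanachNorm (n : ℕ) (N : ((Fin n → ℝ) → ℝ≥0∞) → ℝ≥0∞) : Prop :=
  IsBQBFNorm n N ∧
  (∀ f g : (Fin n → ℝ) → ℝ≥0∞, Measurable f → Measurable g → N (f + g) ≤ N f + N g) ∧
  (∀ (x : Fin n → ℝ) (r : ℝ), 0 < r → ∃ C : ℝ≥0∞, 0 < C ∧ C ≠ ∞ ∧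
    ∀ f : (Fin n → ℝ) → ℝ≥0∞, Measurable f → (∫⁻ y in eucBall n x r, f y) ≤ C * N f)

/-- The associate (Köthe dual) norm of a function norm `N`. -/
def assocNormOf (n : ℕ) (N : ((Fin n → ℝ) → ℝ≥0∞) → ℝ≥0∞)
    (f : (Fin n → ℝ) → ℝ≥0∞) : ℝ≥0∞ :=
  ⨆ (g : (Fin n → ℝ) → ℝ≥0∞) (_ : Measurable g) (_ : N g = 1), ∫⁻ x, f x * g x

/-- The `θ`-convexification of a function norm: `‖f‖_{X^θ} = ‖|f|^θ‖_X^{1/θ}`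
(here stated with `θ` in place of `1/p`, so `X^{1/p}` is `convexPow n (1/p) N`). -/
def convexPow (n : ℕ) (θ : ℝ) (N : ((Fin n → ℝ) → ℝ≥0∞) → ℝ≥0∞)
    (f : (Fin n → ℝ) → ℝ≥0∞) : ℝ≥0∞ :=
  N (fun x => f x ^ θ) ^ (1 / θ)

/-- The associate space norm of the mixed-norm Herz space, for complex-valued functions. -/
def herzAssocNormC (n : ℕ) (α : Fin n → ℝ) (p q : Fin n → ℝ≥0∞)
    (f : (Fin n → ℝ) → ℂ) : ℝ≥0∞ :=
  ⨆ (g : (Fin n → ℝ) → ℂ) (_ : Measurable g) (_ : herzNormC n α p q g = 1),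
    ∫⁻ x, (‖f x * g x‖₊ : ℝ≥0∞)

/-!
The centered maximal function is dominated by a strong maximal function, the iteration of the
one-dimensional maximal operators in each variable, so it suffices to bound in the Herz norm of the
last variable a one-dimensional maximal operator acting on functions with values in the mixed-norm
Herz space of the other variables.

Inner norms are handled by weights. If the vector-valued maximal operator is bounded on `L^r(w)` for
some `r > 1` and all `w ∈ A_r`, with constants depending only on the `A_r` constant of `w`, then by
Rubio de Francia extrapolation the same holds for every `r > 1`. Choosing `r` to be the exponent of
an `L^q` or `ℓ^p` norm, Fubini's theorem passes from values in a space to values in an `L^q` or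
`ℓ^p` space over it; alternating the two builds up the mixed Herz norms.

For the outer Herz norm, the weighted `L^q` inequality is tested with `A_q` weights that are
comparable to `1` on the ring `R_k` and decay off it. This bounds the `L^q` norm on `R_k` of the
maximal function by those of the function on the rings `R_j` with coefficients `2^(-ε|k - j|)`,
relative to the factors `2^(kα)`; such weights exist exactly because `-1/q < α < 1 - 1/q`. Young's
inequality for sequences concludes.
-/

/-! ### Dyadic sums -/

lemma two_rpow_ne_zero (a : ℝ) : (2 : ℝ≥0∞) ^ a ≠ 0 :=
  (ENNReal.rpow_pos (by norm_num) (by norm_num)).ne'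

lemma two_rpow_ne_top (a : ℝ) : (2 : ℝ≥0∞) ^ a ≠ ∞ :=
  ENNReal.rpow_ne_top_of_ne_zero (by norm_num) (by norm_num)

lemma two_rpow_add (a b : ℝ) : (2 : ℝ≥0∞) ^ (a + b) = 2 ^ a * 2 ^ b :=
  ENNReal.rpow_add _ _ (by norm_num) (by norm_num)

lemma two_rpow_lt_two_rpow_iff {a b : ℝ} : (2 : ℝ≥0∞) ^ a < 2 ^ b ↔ a < b :=
  ⟨fun h => lt_of_not_ge fun hba =>
    h.not_ge (ENNReal.rpow_le_rpow_of_exponent_le (by norm_num) hba),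
    ENNReal.rpow_lt_rpow_of_exponent_lt (by norm_num) (by norm_num)⟩

lemma two_rpow_le_two_rpow {a b : ℝ} (h : a ≤ b) : (2 : ℝ≥0∞) ^ a ≤ 2 ^ b :=
  ENNReal.rpow_le_rpow_of_exponent_le (by norm_num) h

lemma exists_two_rpow_lt_le {x : ℝ≥0∞} (h0 : x ≠ 0) (htop : x ≠ ∞) :
    ∃ m : ℤ, (2 : ℝ≥0∞) ^ (m : ℝ) < x ∧ x ≤ 2 ^ ((m : ℝ) + 1) := by
  obtain ⟨m, hlt, hle⟩ := ENNReal.exists_mem_Ioc_zpow h0 htop (y := 2) (by norm_num) (by norm_num)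
  refine ⟨m, by rwa [ENNReal.rpow_intCast], ?_⟩
  rwa [← Int.cast_one, ← Int.cast_add, ENNReal.rpow_intCast]

/-- The sum of the geometric series of ratio `2 ^ (-s)`, the constant in all dyadic sums below. -/
def geomSum (s : ℝ) : ℝ≥0∞ := ∑' i : ℕ, (2 : ℝ≥0∞) ^ (-(i : ℝ) * s)

lemma geomSum_ne_top {s : ℝ} (hs : 0 < s) : geomSum s ≠ ∞ := by
  have hratio : (2 : ℝ≥0∞) ^ (-s) < 1 := by
    rw [← ENNReal.rpow_zero (x := 2), two_rpow_lt_two_rpow_iff]; linarith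
  have hterm (i : ℕ) : (2 : ℝ≥0∞) ^ (-(i : ℝ) * s) = (2 ^ (-s)) ^ i := by
    rw [← ENNReal.rpow_natCast, ← ENNReal.rpow_mul]; congr 1; ring
  simp only [geomSum, hterm, ENNReal.tsum_geometric]
  exact ENNReal.inv_ne_top.2 (tsub_pos_of_lt hratio).ne'

lemma geomSum_ne_zero (s : ℝ) : geomSum s ≠ 0 := fun h =>
  two_rpow_ne_zero _ (ENNReal.tsum_eq_zero.1 h 0)

lemma tsum_two_rpow_lt_le {s : ℝ} (hs : 0 < s) (x : ℝ≥0∞) :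
    ∑' j : ℤ, (if (2 : ℝ≥0∞) ^ (j : ℝ) < x then (2 : ℝ≥0∞) ^ ((j : ℝ) * s) else 0) ≤
      geomSum s * x ^ s := by
  rcases eq_or_ne x 0 with rfl | h0
  · simp
  rcases eq_or_ne x ∞ with rfl | htop
  · rw [ENNReal.top_rpow_of_pos hs, ENNReal.mul_top (geomSum_ne_zero s)]
    exact le_top
  obtain ⟨m, hlt, hle⟩ := exists_two_rpow_lt_le h0 htop
  have hinj : Function.Injective fun i : ℕ => m - (i : ℤ) := fun i j hij => by simpa using hij
  rw [← hinj.tsum_eq fun j hj => ?_]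
  · calc _ ≤ ∑' i : ℕ, (2 : ℝ≥0∞) ^ (-(i : ℝ) * s) * 2 ^ ((m : ℝ) * s) := by
          refine ENNReal.tsum_le_tsum fun i => ?_
          split_ifs
          · rw [← two_rpow_add]
            apply le_of_eq; congr 1; push_cast; ring
          · exact zero_le
      _ = geomSum s * (2 ^ (m : ℝ)) ^ s := by
          rw [ENNReal.tsum_mul_right, geomSum, ENNReal.rpow_mul]
      _ ≤ geomSum s * x ^ s := by gcongr
  · simp only [Function.mem_support, ne_eq, ite_eq_right_iff, Classical.not_imp] at hj
    have hjm : j < m + 1 := by exact_mod_cast two_rpow_lt_two_rpow_iff.1 (hj.1.trans_le hle)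
    exact ⟨(m - j).toNat, by simp only; omega⟩

lemma rpow_le_tsum_two_rpow {p : ℝ} (hp : 0 < p) (x : ℝ≥0∞) :
    x ^ p ≤ ∑' j : ℤ, if 2 * (2 : ℝ≥0∞) ^ (j : ℝ) < x then 2 ^ (((j : ℝ) + 2) * p) else 0 := by
  have hdouble (t : ℝ) : 2 * (2 : ℝ≥0∞) ^ t = 2 ^ (t + 1) := by
    rw [two_rpow_add, ENNReal.rpow_one, mul_comm]
  rcases eq_or_ne x 0 with rfl | h0
  · simp [hp]
  rcases eq_or_ne x ∞ with rfl | htop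
  · have hlt (j : ℤ) : 2 * (2 : ℝ≥0∞) ^ (j : ℝ) < ∞ := by
      rw [hdouble]; exact (two_rpow_ne_top _).lt_top
    simp only [hlt, if_true]
    calc _ ≤ ∑' _ : ℕ, (1 : ℝ≥0∞) := by
          rw [ENNReal.tsum_const_eq_top_of_ne_zero one_ne_zero]; exact le_top
      _ ≤ ∑' i : ℕ, (2 : ℝ≥0∞) ^ ((((i : ℤ) : ℝ) + 2) * p) :=
          ENNReal.tsum_le_tsum fun i => ENNReal.one_le_rpow (by norm_num) (by positivity)
      _ ≤ _ := ENNReal.tsum_comp_le_tsum_of_injective Nat.cast_injective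
          (fun j : ℤ => (2 : ℝ≥0∞) ^ (((j : ℝ) + 2) * p))
  obtain ⟨m, hlt, hle⟩ := exists_two_rpow_lt_le h0 htop
  refine le_trans ?_ (ENNReal.le_tsum (m - 1))
  rw [if_pos (by rw [hdouble]; push_cast; simpa using hlt)]
  calc x ^ p ≤ (2 ^ ((m : ℝ) + 1)) ^ p := by gcongr
    _ = 2 ^ ((((m - 1 : ℤ) : ℝ) + 2) * p) := by
        rw [← ENNReal.rpow_mul]; congr 2; push_cast; ring

lemma tsum_mul_rpow_le {ι : Type*} (θ b : ι → ℝ≥0∞) {p : ℝ} (hp : 0 < p) :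
    (∑' i, θ i * b i) ^ p ≤ (∑' i, θ i) ^ p * ∑' i, b i ^ p := by
  have hb (i : ι) : b i ≤ (∑' i, b i ^ p) ^ p⁻¹ := by
    rw [ENNReal.le_rpow_inv_iff hp]
    exact ENNReal.le_tsum (f := fun i => b i ^ p) i
  calc (∑' i, θ i * b i) ^ p ≤ (∑' i, θ i * (∑' i, b i ^ p) ^ p⁻¹) ^ p := by
        gcongr with i
        exact hb i
    _ = (∑' i, θ i) ^ p * ∑' i, b i ^ p := by
        rw [ENNReal.tsum_mul_right, ENNReal.mul_rpow_of_nonneg _ _ hp.le,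
          ENNReal.rpow_inv_rpow hp.ne']

/-! ### The maximal function of a measure on the line -/

lemma exists_subset_biUnion_Ioo_card_le_two {R ι : Type*} [LinearOrder R] (a b : ι → R)
    (s : Finset ι) : ∃ t ⊆ s, (⋃ i ∈ s, Set.Ioo (a i) (b i)) ⊆ ⋃ i ∈ t, Set.Ioo (a i) (b i) ∧
      ∀ x, {i ∈ t | x ∈ Set.Ioo (a i) (b i)}.card ≤ 2 := by
  classical
  induction s using Finset.strongInduction with
  | H s ih =>
  by_cases hs : ∀ x, {i ∈ s | x ∈ Set.Ioo (a i) (b i)}.card ≤ 2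
  · exact ⟨s, subset_rfl, subset_rfl, hs⟩
  push Not at hs
  obtain ⟨x, hx⟩ := hs
  set F := {i ∈ s | x ∈ Set.Ioo (a i) (b i)} with hF
  have hFs {i : ι} (hi : i ∈ F) : i ∈ s ∧ a i < x ∧ x < b i := by simpa [hF] using hi
  have hne : F.Nonempty := Finset.card_pos.1 (by omega)
  obtain ⟨c, hc, hcmin⟩ := F.exists_min_image a hne
  obtain ⟨d, hd, hdmax⟩ := F.exists_max_image b hne
  -- Of the intervals through `x`, the two reaching furthest left and right cover all others.
  obtain ⟨e, he, hecd⟩ : ∃ e ∈ F, e ∉ ({c, d} : Finset ι) :=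
    Finset.exists_mem_notMem_of_card_lt_card (Finset.card_le_two.trans_lt hx)
  simp only [Finset.mem_insert, Finset.mem_singleton, not_or] at hecd
  obtain ⟨t, hts, hcover, hoverlap⟩ := ih _ (Finset.erase_ssubset (hFs he).1)
  refine ⟨t, hts.trans (Finset.erase_subset _ _), subset_trans ?_ hcover, hoverlap⟩
  intro y hy
  simp only [Set.mem_iUnion, exists_prop] at hy ⊢
  obtain ⟨i, hi, hyi⟩ := hy
  by_cases hie : i = e
  · subst hie
    rcases le_or_gt y x with hyx | hxy
    · exact ⟨c, Finset.mem_erase.2 ⟨Ne.symm hecd.1, (hFs hc).1⟩,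
        (hcmin i he).trans_lt hyi.1, hyx.trans_lt (hFs hc).2.2⟩
    · exact ⟨d, Finset.mem_erase.2 ⟨Ne.symm hecd.2, (hFs hd).1⟩,
        (hFs hd).2.1.trans hxy, hyi.2.trans_le (hdmax i he)⟩
  · exact ⟨i, Finset.mem_erase.2 ⟨hie, hi⟩, hyi⟩

lemma measure_iUnion_Ioo_le {R ι : Type*} [LinearOrder R] [TopologicalSpace R]
    [OrderClosedTopology R] [MeasurableSpace R] [OpensMeasurableSpace R] [Countable ι]
    {μ ν : Measure R} {a b : ι → R} (h : ∀ i, μ (Set.Ioo (a i) (b i)) ≤ ν (Set.Ioo (a i) (b i))) :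
    μ (⋃ i, Set.Ioo (a i) (b i)) ≤ 2 * ν Set.univ := by
  classical
  have hmono : Monotone fun s : Finset ι => ⋃ i ∈ s, Set.Ioo (a i) (b i) :=
    fun _ _ hst => Set.biUnion_subset_biUnion_left hst
  rw [Set.iUnion_eq_iUnion_finset, hmono.directed_le.measure_iUnion]
  refine iSup_le fun s => ?_
  obtain ⟨t, -, hcover, hoverlap⟩ := exists_subset_biUnion_Ioo_card_le_two a b s
  calc μ (⋃ i ∈ s, Set.Ioo (a i) (b i)) ≤ ∑ i ∈ t, μ (Set.Ioo (a i) (b i)) :=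
        (measure_mono hcover).trans (measure_biUnion_finset_le _ _)
    _ ≤ ∑ i ∈ t, ν (Set.Ioo (a i) (b i)) := Finset.sum_le_sum fun i _ => h i
    _ = ∫⁻ x, ∑ i ∈ t, (Set.Ioo (a i) (b i)).indicator 1 x ∂ν := by
        rw [lintegral_finsetSum _ fun i _ => measurable_one.indicator measurableSet_Ioo]
        simp only [lintegral_indicator_one measurableSet_Ioo]
    _ ≤ ∫⁻ _, 2 ∂ν := by
        refine lintegral_mono fun x => ?_
        simp only [Set.indicator_apply, Pi.one_apply, Finset.sum_boole]
        exact_mod_cast hoverlap x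
    _ = 2 * ν Set.univ := lintegral_const 2

/-- The open interval with rational endpoints `I.1` and `I.2`. -/
def ratIoo (I : ℚ × ℚ) : Set ℝ := Set.Ioo (I.1 : ℝ) (I.2 : ℝ)

/-- The uncentered Hardy–Littlewood maximal function of `f` with respect to a measure `μ` on the
line. Intervals with rational endpoints suffice, and make the supremum countable. -/
def maximal (μ : Measure ℝ) (f : ℝ → ℝ≥0∞) (x : ℝ) : ℝ≥0∞ :=
  ⨆ I : ℚ × ℚ, (ratIoo I).indicator (fun _ => ⨍⁻ y in ratIoo I, f y ∂μ) x

lemma measurableSet_ratIoo (I : ℚ × ℚ) : MeasurableSet (ratIoo I) := measurableSet_Ioo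

lemma volume_ratIoo_ne_zero {I : ℚ × ℚ} (hI : I.1 < I.2) : volume (ratIoo I) ≠ 0 := by
  simpa [ratIoo] using hI

lemma volume_ratIoo_ne_top (I : ℚ × ℚ) : volume (ratIoo I) ≠ ∞ := by simp [ratIoo]

lemma fst_lt_snd_of_mem_ratIoo {I : ℚ × ℚ} {x : ℝ} (hx : x ∈ ratIoo I) : I.1 < I.2 := by
  exact_mod_cast hx.1.trans hx.2

section maximal

variable (μ : Measure ℝ)

lemma measurable_maximal (f : ℝ → ℝ≥0∞) : Measurable (maximal μ f) :=
  .iSup fun I => measurable_const.indicator (measurableSet_ratIoo I)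

variable {μ} {f g : ℝ → ℝ≥0∞} {x : ℝ}

lemma measurable_maximal_uncurry {Z : Type*} [MeasurableSpace Z] [SFinite μ] {F : ℝ → Z → ℝ≥0∞}
    (hF : Measurable fun y : ℝ × Z => F y.1 y.2) :
    Measurable fun y : ℝ × Z => maximal μ (F · y.2) y.1 := by
  refine .iSup fun I => ?_
  have hmem : MeasurableSet {y : ℝ × Z | y.1 ∈ ratIoo I} := measurable_fst (measurableSet_ratIoo I)
  have hav : Measurable fun y : ℝ × Z => ⨍⁻ t in ratIoo I, F t y.2 ∂μ := by
    simp only [setLAverage_eq]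
    exact (hF.lintegral_prod_left'.comp measurable_snd).div_const _
  exact hav.indicator hmem

lemma laverage_ratIoo_le_maximal {I : ℚ × ℚ} (hx : x ∈ ratIoo I) :
    ⨍⁻ y in ratIoo I, f y ∂μ ≤ maximal μ f x :=
  le_iSup_of_le I (Set.indicator_of_mem hx fun _ => ⨍⁻ y in ratIoo I, f y ∂μ).ge

lemma maximal_le {c : ℝ≥0∞} (h : ∀ I, x ∈ ratIoo I → ⨍⁻ y in ratIoo I, f y ∂μ ≤ c) :
    maximal μ f x ≤ c :=
  iSup_le fun I => Set.indicator_apply_le (g := fun _ => c) fun hx => h I hx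

lemma maximal_mono (h : ∀ x, f x ≤ g x) (x : ℝ) : maximal μ f x ≤ maximal μ g x :=
  maximal_le fun _ hx => (lintegral_mono h).trans (laverage_ratIoo_le_maximal hx)

lemma maximal_tsum_le {ι : Type*} [Countable ι] {F : ι → ℝ → ℝ≥0∞} (hF : ∀ i, Measurable (F i)) :
    maximal μ (fun y => ∑' i, F i y) x ≤ ∑' i, maximal μ (F i) x := by
  refine maximal_le fun I hx => ?_
  rw [laverage, lintegral_tsum fun i => (hF i).aemeasurable]
  exact ENNReal.tsum_le_tsum fun i => laverage_ratIoo_le_maximal hx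

lemma maximal_const_mul_le (c : ℝ≥0∞) (hf : Measurable f) :
    maximal μ (fun y => c * f y) x ≤ c * maximal μ f x := by
  refine maximal_le fun I hx => ?_
  rw [laverage, lintegral_const_mul _ hf]
  exact mul_le_mul_right (laverage_ratIoo_le_maximal hx) c

lemma maximal_add_le (hf : Measurable f) :
    maximal μ (fun y => f y + g y) x ≤ maximal μ f x + maximal μ g x := by
  refine maximal_le fun I hx => ?_
  rw [laverage, lintegral_add_left hf]
  exact add_le_add (laverage_ratIoo_le_maximal hx) (laverage_ratIoo_le_maximal hx)

lemma maximal_const_le (c : ℝ≥0∞) : maximal μ (fun _ => c) x ≤ c := by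
  refine maximal_le fun I _ => ?_
  rw [setLAverage_eq, setLIntegral_const]
  exact ENNReal.div_le_of_le_mul le_rfl

end maximal

lemma le_setLIntegral_of_two_mul_lt_setLAverage {Y : Type*} [MeasurableSpace Y] {μ : Measure Y}
    {I : Set Y} {f : Y → ℝ≥0∞} {l : ℝ≥0∞} (hl : l ≠ ∞) (h : 2 * l < ⨍⁻ y in I, f y ∂μ) :
    l * μ I ≤ ∫⁻ y in I, {y | l < f y}.indicator f y ∂μ := by
  rw [setLAverage_eq] at h
  have hI0 : μ I ≠ 0 := fun hI => by simp [setLIntegral_measure_zero I f hI] at h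
  have hItop : μ I ≠ ∞ := fun hI => by simp [hI] at h
  have hsplit : ∫⁻ y in I, f y ∂μ ≤ ∫⁻ y in I, {y | l < f y}.indicator f y ∂μ + l * μ I := by
    rw [← setLIntegral_const, ← lintegral_add_right _ measurable_const]
    refine lintegral_mono fun y => ?_
    by_cases hy : l < f y
    · rw [Set.indicator_of_mem (by exact hy)]; exact le_self_add
    · simpa [hy] using not_lt.1 hy
  have hlt := ((ENNReal.le_div_iff_mul_le (.inl hI0) (.inl hItop)).1 h.le).trans hsplit
  rw [two_mul, add_mul] at hlt
  exact (ENNReal.add_le_add_iff_right (ENNReal.mul_ne_top hl hItop)).1 hlt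

lemma measure_two_mul_lt_maximal_le (μ : Measure ℝ) {f : ℝ → ℝ≥0∞} (hf : Measurable f)
    {l : ℝ≥0∞} (hl0 : l ≠ 0) (hl : l ≠ ∞) :
    μ {x | 2 * l < maximal μ f x} ≤ 2 * (l⁻¹ * ∫⁻ x, {x | l < f x}.indicator f x ∂μ) := by
  have hind := hf.indicator (measurableSet_lt (measurable_const (a := l)) hf)
  let S := {I : ℚ × ℚ // 2 * l < ⨍⁻ y in ratIoo I, f y ∂μ}
  let ν := μ.withDensity fun x => l⁻¹ * {x | l < f x}.indicator f x
  have hS (I : S) : μ (ratIoo I) ≤ ν (ratIoo I) := by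
    rw [withDensity_apply _ (measurableSet_ratIoo _), lintegral_const_mul _ hind,
      ← ENNReal.mul_le_iff_le_inv hl0 hl]
    exact le_setLIntegral_of_two_mul_lt_setLAverage hl I.2
  calc μ {x | 2 * l < maximal μ f x} ≤ μ (⋃ I : S, ratIoo I) := by
        refine measure_mono fun x hx => ?_
        obtain ⟨I, hI⟩ := lt_iSup_iff.1 (show 2 * l < maximal μ f x from hx)
        have hxI : x ∈ ratIoo I := Set.mem_of_indicator_ne_zero hI.ne_bot
        rw [Set.indicator_of_mem hxI] at hI
        exact Set.mem_iUnion.2 ⟨⟨I, hI⟩, hxI⟩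
    _ ≤ 2 * ν Set.univ := measure_iUnion_Ioo_le hS
    _ = _ := by rw [withDensity_apply _ .univ, Measure.restrict_univ, lintegral_const_mul _ hind]

/-- The factor in Marcinkiewicz interpolation between a weak `L¹` and an `L^∞` bound. -/
def marcinkiewiczConst (p : ℝ) : ℝ≥0∞ := 2 * (2 : ℝ≥0∞) ^ (2 * p) * geomSum (p - 1)

lemma marcinkiewiczConst_ne_top {p : ℝ} (hp : 1 < p) : marcinkiewiczConst p ≠ ∞ :=
  ENNReal.mul_ne_top (ENNReal.mul_ne_top (by norm_num) (two_rpow_ne_top _))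
    (geomSum_ne_top (by linarith))

lemma rpow_sub_one_mul_self {p : ℝ} (hp : 1 ≤ p) (x : ℝ≥0∞) : x ^ (p - 1) * x = x ^ p := by
  conv_rhs => rw [← sub_add_cancel p 1,
    ENNReal.rpow_add_of_nonneg _ _ (by linarith) zero_le_one, ENNReal.rpow_one]

lemma tsum_two_rpow_mul_indicator_le {Y : Type*} {p : ℝ} (hp : 1 < p) (f : Y → ℝ≥0∞) (x : Y) :
    ∑' j : ℤ, (2 : ℝ≥0∞) ^ ((j : ℝ) * (p - 1)) * {x | (2 : ℝ≥0∞) ^ (j : ℝ) < f x}.indicator f x ≤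
      geomSum (p - 1) * f x ^ p := by
  have hterm (j : ℤ) : (2 : ℝ≥0∞) ^ ((j : ℝ) * (p - 1)) *
      {x | (2 : ℝ≥0∞) ^ (j : ℝ) < f x}.indicator f x =
      (if (2 : ℝ≥0∞) ^ (j : ℝ) < f x then 2 ^ ((j : ℝ) * (p - 1)) else 0) * f x := by
    simp only [Set.indicator_apply, Set.mem_ofPred_eq]
    split_ifs <;> simp
  rw [tsum_congr hterm, ENNReal.tsum_mul_right, ← rpow_sub_one_mul_self hp.le, ← mul_assoc]
  gcongr
  exact tsum_two_rpow_lt_le (by linarith) _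

theorem lintegral_rpow_le_of_weak_type {Y : Type*} [MeasurableSpace Y] {μ : Measure Y}
    {p : ℝ} (hp : 1 < p) {f F : Y → ℝ≥0∞} (hf : Measurable f) (hF : Measurable F)
    (h : ∀ l : ℝ≥0∞, l ≠ 0 → l ≠ ∞ →
      μ {x | 2 * l < F x} ≤ 2 * (l⁻¹ * ∫⁻ x, {x | l < f x}.indicator f x ∂μ)) :
    ∫⁻ x, F x ^ p ∂μ ≤ marcinkiewiczConst p * ∫⁻ x, f x ^ p ∂μ := by
  have hF_level (j : ℤ) : MeasurableSet {x | 2 * (2 : ℝ≥0∞) ^ (j : ℝ) < F x} :=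
    measurableSet_lt measurable_const hF
  have hf_ind (j : ℤ) : Measurable ({x | (2 : ℝ≥0∞) ^ (j : ℝ) < f x}.indicator f) :=
    hf.indicator (measurableSet_lt measurable_const hf)
  have hcoef (j : ℝ) (T : ℝ≥0∞) : (2 : ℝ≥0∞) ^ ((j + 2) * p) * (2 * (((2 : ℝ≥0∞) ^ j)⁻¹ * T)) =
      2 * (2 : ℝ≥0∞) ^ (2 * p) * ((2 : ℝ≥0∞) ^ (j * (p - 1)) * T) := by
    have hexp : (2 : ℝ≥0∞) ^ ((j + 2) * p) * 2 ^ (-j) = 2 ^ (2 * p) * 2 ^ (j * (p - 1)) := by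
      rw [← two_rpow_add, ← two_rpow_add]; congr 1; ring
    rw [← ENNReal.rpow_neg, ← mul_assoc, mul_assoc 2, ← mul_assoc (_ ^ (2 * p)), ← hexp]
    ring
  calc ∫⁻ x, F x ^ p ∂μ
      ≤ ∫⁻ x, ∑' j : ℤ, {x | 2 * (2 : ℝ≥0∞) ^ (j : ℝ) < F x}.indicator
          (fun _ => (2 : ℝ≥0∞) ^ (((j : ℝ) + 2) * p)) x ∂μ :=
        lintegral_mono fun x => by
          simpa only [Set.indicator_apply, Set.mem_ofPred_eq] using
            rpow_le_tsum_two_rpow (by linarith) (F x)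
    _ = ∑' j : ℤ, (2 : ℝ≥0∞) ^ (((j : ℝ) + 2) * p) * μ {x | 2 * (2 : ℝ≥0∞) ^ (j : ℝ) < F x} := by
        rw [lintegral_tsum fun j => (measurable_const.indicator (hF_level j)).aemeasurable]
        exact tsum_congr fun j => lintegral_indicator_const (hF_level j) _
    _ ≤ ∑' j : ℤ, 2 * (2 : ℝ≥0∞) ^ (2 * p) * ((2 : ℝ≥0∞) ^ ((j : ℝ) * (p - 1)) *
          ∫⁻ x, {x | (2 : ℝ≥0∞) ^ (j : ℝ) < f x}.indicator f x ∂μ) := by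
        refine ENNReal.tsum_le_tsum fun j => ?_
        rw [← hcoef]
        gcongr
        exact h _ (two_rpow_ne_zero _) (two_rpow_ne_top _)
    _ = 2 * (2 : ℝ≥0∞) ^ (2 * p) * ∫⁻ x, ∑' j : ℤ, (2 : ℝ≥0∞) ^ ((j : ℝ) * (p - 1)) *
          {x | (2 : ℝ≥0∞) ^ (j : ℝ) < f x}.indicator f x ∂μ := by
        rw [lintegral_tsum fun j => ((hf_ind j).const_mul _).aemeasurable, ENNReal.tsum_mul_left]
        simp only [lintegral_const_mul _ (hf_ind _)]
    _ ≤ 2 * (2 : ℝ≥0∞) ^ (2 * p) * ∫⁻ x, geomSum (p - 1) * f x ^ p ∂μ := by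
        gcongr with x
        exact tsum_two_rpow_mul_indicator_le hp f x
    _ = marcinkiewiczConst p * ∫⁻ x, f x ^ p ∂μ := by
        rw [lintegral_const_mul _ (hf.pow_const _), ← mul_assoc, marcinkiewiczConst]

theorem lintegral_maximal_rpow_le (μ : Measure ℝ) {p : ℝ} (hp : 1 < p) {f : ℝ → ℝ≥0∞}
    (hf : Measurable f) :
    ∫⁻ x, maximal μ f x ^ p ∂μ ≤ marcinkiewiczConst p * ∫⁻ x, f x ^ p ∂μ :=
  lintegral_rpow_le_of_weak_type hp hf (measurable_maximal μ f) fun _ =>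
    measure_two_mul_lt_maximal_le μ hf

/-! ### Muckenhoupt weights -/

section ENNReal

variable {Y : Type*} [MeasurableSpace Y] {μ : Measure Y}

lemma ae_rpow_ne {w : Y → ℝ≥0∞} (h : ∀ᵐ x ∂μ, w x ≠ 0 ∧ w x ≠ ∞) (s : ℝ) :
    ∀ᵐ x ∂μ, w x ^ s ≠ 0 ∧ w x ^ s ≠ ∞ :=
  h.mono fun _ hx => ⟨(ENNReal.rpow_pos (pos_iff_ne_zero.2 hx.1) hx.2).ne',
    ENNReal.rpow_ne_top_of_ne_zero hx.1 hx.2⟩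

lemma setLAverage_ne_zero {I : Set Y} (hI : μ I ≠ 0) (hI' : μ I ≠ ∞) {f : Y → ℝ≥0∞}
    (hf : Measurable f) (hf0 : ∀ᵐ x ∂μ, f x ≠ 0) : ⨍⁻ x in I, f x ∂μ ≠ 0 := by
  rw [setLAverage_eq]
  refine (ENNReal.div_pos (fun h => hI ?_) hI').ne'
  rw [lintegral_eq_zero_iff hf] at h
  have hfalse : ∀ᵐ _ ∂μ.restrict I, False := by
    filter_upwards [h, ae_restrict_of_ae hf0] with x hx hx0 using hx0 hx
  simpa [ae_iff] using hfalse

lemma le_setLAverage {I : Set Y} (hI : μ I ≠ 0) (hI' : μ I ≠ ∞) {f : Y → ℝ≥0∞}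
    (hf : Measurable f) {c : ℝ≥0∞} (h : ∀ x ∈ I, c ≤ f x) : c ≤ ⨍⁻ x in I, f x ∂μ := by
  rw [setLAverage_eq, ENNReal.le_div_iff_mul_le (.inl hI) (.inl hI'), ← setLIntegral_const]
  exact setLIntegral_mono hf h

lemma setLAverage_eq_mul_withDensity {I : Set Y} (hI : MeasurableSet I) {w f : Y → ℝ≥0∞}
    (hw : Measurable w) (hf : Measurable f) (hw_ne : ∀ᵐ x ∂μ, w x ≠ 0 ∧ w x ≠ ∞)
    (h0 : ⨍⁻ x in I, w x ∂μ ≠ 0) (htop : ⨍⁻ x in I, w x ∂μ ≠ ∞) (hI' : μ I ≠ ∞) :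
    ⨍⁻ x in I, f x ∂μ =
      (⨍⁻ x in I, w x ∂μ) * ⨍⁻ x in I, (w x)⁻¹ * f x ∂μ.withDensity w := by
  have hint : ∫⁻ x in I, (w x)⁻¹ * f x ∂μ.withDensity w = ∫⁻ x in I, f x ∂μ := by
    rw [setLIntegral_withDensity_eq_setLIntegral_mul _ hw (g := fun x => (w x)⁻¹ * f x)
      (hw.inv.mul hf) hI]
    refine lintegral_congr_ae ((ae_restrict_of_ae hw_ne).mono fun x hx => ?_)
    simp only [Pi.mul_apply]
    rw [← mul_assoc, ENNReal.mul_inv_cancel hx.1 hx.2, one_mul]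
  rw [setLAverage_eq] at h0 htop
  have hw0 : ∫⁻ x in I, w x ∂μ ≠ 0 := fun h => h0 (by simp [h])
  have hwtop : ∫⁻ x in I, w x ∂μ ≠ ∞ := fun h => htop (by simp [h, ENNReal.top_div, hI'])
  rw [setLAverage_eq, setLAverage_eq, setLAverage_eq, hint, withDensity_apply _ hI,
    ENNReal.div_eq_inv_mul, ENNReal.div_eq_inv_mul, ENNReal.div_eq_inv_mul, mul_assoc,
    ENNReal.mul_inv_cancel_left hw0 hwtop]

lemma lintegral_inv_mul_rpow_withDensity {w f : Y → ℝ≥0∞} (hw : Measurable w) (hf : Measurable f)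
    (hw_ne : ∀ᵐ x ∂μ, w x ≠ 0 ∧ w x ≠ ∞) {p : ℝ} (hp : 0 ≤ p) :
    ∫⁻ x, ((w x)⁻¹ * f x) ^ p ∂μ.withDensity w = ∫⁻ x, f x ^ p * w x ^ (1 - p) ∂μ := by
  rw [lintegral_withDensity_eq_lintegral_mul _ hw (g := fun x => ((w x)⁻¹ * f x) ^ p)
    ((hw.inv.mul hf).pow_const p)]
  refine lintegral_congr_ae (hw_ne.mono fun x hx => ?_)
  simp only [Pi.mul_apply]
  rw [ENNReal.mul_rpow_of_nonneg _ _ hp, ENNReal.inv_rpow, ← ENNReal.rpow_neg, sub_eq_add_neg,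
    ENNReal.rpow_add _ _ hx.1 hx.2, ENNReal.rpow_one]
  ring

end ENNReal

/-- The weight `w ^ (1 - p')` dual to `w` at the exponent `p`, where `p'` is the conjugate exponent
and hence `1 - p' = (1 - p)⁻¹`. -/
def dualWeight (p : ℝ) (w : ℝ → ℝ≥0∞) (x : ℝ) : ℝ≥0∞ := w x ^ (1 - p)⁻¹

/-- Muckenhoupt's class `A_p` of weights on the line, with constant `A`. It is enough to test the
intervals that define `maximal`. -/
structure IsMuckenhoupt (p : ℝ) (A : ℝ≥0∞) (w : ℝ → ℝ≥0∞) : Prop where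
  measurable : Measurable w
  ae_ne : ∀ᵐ x, w x ≠ 0 ∧ w x ≠ ∞
  laverage_mul_le : ∀ I : ℚ × ℚ, I.1 < I.2 →
    (⨍⁻ x in ratIoo I, w x ∂volume) * (⨍⁻ x in ratIoo I, dualWeight p w x ∂volume) ^ (p - 1) ≤ A

lemma one_sub_conjExponent {p : ℝ} (hp : 1 < p) : 1 - p.conjExponent = (1 - p)⁻¹ := by
  have hne : p - 1 ≠ 0 := by linarith
  have hne' : 1 - p ≠ 0 := by linarith
  rw [Real.conjExponent]
  field_simp
  ring

lemma dualWeight_dualWeight {p : ℝ} (hp : 1 < p) (w : ℝ → ℝ≥0∞) :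
    dualWeight p.conjExponent (dualWeight p w) = w := by
  funext x
  rw [dualWeight, dualWeight, one_sub_conjExponent hp, inv_inv, ← ENNReal.rpow_mul,
    inv_mul_cancel₀ (by linarith), ENNReal.rpow_one]

namespace IsMuckenhoupt

variable {p : ℝ} {A : ℝ≥0∞} {w : ℝ → ℝ≥0∞}

protected lemma dualWeight (hw : IsMuckenhoupt p A w) (hp : 1 < p) :
    IsMuckenhoupt p.conjExponent (A ^ (p.conjExponent - 1)) (dualWeight p w) where
  measurable := hw.measurable.pow_const _
  ae_ne := ae_rpow_ne hw.ae_ne _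
  laverage_mul_le I hI := by
    have hp' : p.conjExponent - 1 = (p - 1)⁻¹ := by
      rw [← neg_sub, one_sub_conjExponent hp, ← inv_neg, neg_sub]
    have hnonneg : 0 ≤ (p - 1)⁻¹ := inv_nonneg.2 (by linarith)
    rw [dualWeight_dualWeight hp, hp', mul_comm]
    calc _ = ((⨍⁻ x in ratIoo I, w x ∂volume) *
          (⨍⁻ x in ratIoo I, dualWeight p w x ∂volume) ^ (p - 1)) ^ (p - 1)⁻¹ := by
          rw [ENNReal.mul_rpow_of_nonneg _ _ hnonneg, ENNReal.rpow_rpow_inv (by linarith)]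
      _ ≤ A ^ (p - 1)⁻¹ := by gcongr; exact hw.laverage_mul_le I hI

lemma laverage_ne_zero (hw : IsMuckenhoupt p A w) {I : ℚ × ℚ} (hI : I.1 < I.2) :
    ⨍⁻ x in ratIoo I, w x ∂volume ≠ 0 :=
  setLAverage_ne_zero (volume_ratIoo_ne_zero hI) (volume_ratIoo_ne_top I) hw.measurable
    (hw.ae_ne.mono fun _ => And.left)

lemma laverage_ne_top (hw : IsMuckenhoupt p A w) (hp : 1 < p) (hA : A ≠ ∞) {I : ℚ × ℚ}
    (hI : I.1 < I.2) : ⨍⁻ x in ratIoo I, w x ∂volume ≠ ∞ := fun htop => by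
  have hdual := (hw.dualWeight hp).laverage_ne_zero hI
  have hle := hw.laverage_mul_le I hI
  rw [htop, ENNReal.top_mul (by simpa [hdual] using fun _ => hp.le)] at hle
  exact hA (top_le_iff.1 hle)

lemma maximal_rpow_le (hw : IsMuckenhoupt p A w) (hp : 1 < p) (hA : A ≠ ∞) {f : ℝ → ℝ≥0∞}
    (hf : Measurable f) (x : ℝ) :
    maximal volume f x ^ (p - 1) ≤ A * maximal (volume.withDensity w) (fun y => (w y)⁻¹ *
      maximal (volume.withDensity (dualWeight p w))
        (fun z => (dualWeight p w z)⁻¹ * f z) y ^ (p - 1)) x := by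
  have hp1 : 0 < p - 1 := by linarith
  set σ := dualWeight p w
  set g := maximal (volume.withDensity σ) fun z => (σ z)⁻¹ * f z
  have hg : Measurable fun y => g y ^ (p - 1) := (measurable_maximal _ _).pow_const _
  have hσ := hw.dualWeight hp
  rw [← ENNReal.le_rpow_inv_iff hp1]
  refine maximal_le fun I hx => ?_
  have hI := fst_lt_snd_of_mem_ratIoo hx
  have hI_meas := measurableSet_ratIoo I
  have hI_top := volume_ratIoo_ne_top I
  have hσ_top := hσ.laverage_ne_top (Real.HolderConjugate.conjExponent hp).symm.lt
    (ENNReal.rpow_ne_top_of_nonneg (Real.HolderConjugate.conjExponent hp).symm.sub_one_pos.le hA) hI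
  rw [ENNReal.le_rpow_inv_iff hp1, setLAverage_eq_mul_withDensity hI_meas hσ.measurable hf
      hσ.ae_ne (hσ.laverage_ne_zero hI) hσ_top hI_top, ENNReal.mul_rpow_of_nonneg _ _ hp1.le]
  calc (⨍⁻ y in ratIoo I, σ y ∂volume) ^ (p - 1) *
        (⨍⁻ y in ratIoo I, (σ y)⁻¹ * f y ∂volume.withDensity σ) ^ (p - 1)
      ≤ (⨍⁻ y in ratIoo I, σ y ∂volume) ^ (p - 1) * ⨍⁻ y in ratIoo I, g y ^ (p - 1) ∂volume := by
        gcongr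
        refine le_setLAverage (volume_ratIoo_ne_zero hI) hI_top hg fun y hy => ?_
        gcongr
        exact laverage_ratIoo_le_maximal hy
    _ = (⨍⁻ y in ratIoo I, w y ∂volume) * (⨍⁻ y in ratIoo I, σ y ∂volume) ^ (p - 1) *
          ⨍⁻ y in ratIoo I, (w y)⁻¹ * g y ^ (p - 1) ∂volume.withDensity w := by
        rw [setLAverage_eq_mul_withDensity hI_meas hw.measurable hg hw.ae_ne
          (hw.laverage_ne_zero hI) (hw.laverage_ne_top hp hA hI) hI_top]
        ring
    _ ≤ _ := by
        gcongr
        · exact hw.laverage_mul_le I hI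
        · exact laverage_ratIoo_le_maximal hx

end IsMuckenhoupt

/-- The factor in Muckenhoupt's theorem for `A_p` weights with constant `A`. -/
def muckenhouptConst (p : ℝ) (A : ℝ≥0∞) : ℝ≥0∞ :=
  A ^ p.conjExponent * (marcinkiewiczConst p.conjExponent * marcinkiewiczConst p)

lemma muckenhouptConst_ne_top {p : ℝ} (hp : 1 < p) {A : ℝ≥0∞} (hA : A ≠ ∞) :
    muckenhouptConst p A ≠ ∞ := by
  have hp' := (Real.HolderConjugate.conjExponent hp).symm
  exact ENNReal.mul_ne_top (ENNReal.rpow_ne_top_of_nonneg hp'.nonneg hA)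
    (ENNReal.mul_ne_top (marcinkiewiczConst_ne_top hp'.lt) (marcinkiewiczConst_ne_top hp))

lemma lintegral_maximal_withDensity_rpow_mul_le {p : ℝ} (hp : 1 < p) {w f : ℝ → ℝ≥0∞}
    (hw : Measurable w) (hw_ne : ∀ᵐ x, w x ≠ 0 ∧ w x ≠ ∞) (hf : Measurable f) :
    ∫⁻ x, maximal (volume.withDensity w) (fun y => (w y)⁻¹ * f y) x ^ p * w x ≤
      marcinkiewiczConst p * ∫⁻ x, f x ^ p * w x ^ (1 - p) := by
  have h := lintegral_maximal_rpow_le (volume.withDensity w) hp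
    (f := fun y => (w y)⁻¹ * f y) (hw.inv.mul hf)
  rw [lintegral_withDensity_eq_lintegral_mul _ hw ((measurable_maximal _ _).pow_const p),
    lintegral_inv_mul_rpow_withDensity hw hf hw_ne (by linarith)] at h
  simpa only [Pi.mul_apply, mul_comm (w _)] using h

-- Lerner's proof: by `IsMuckenhoupt.maximal_rpow_le` the unweighted maximal function is controlled
-- by the maximal functions of the measures `w` and `w ^ (1 - p')`, which are bounded on `L^{p'}(w)`
-- and `L^p(w ^ (1 - p'))` respectively.
theorem IsMuckenhoupt.lintegral_maximal_rpow_mul_le {p : ℝ} (hp : 1 < p) {A : ℝ≥0∞} (hA : A ≠ ∞)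
    {w : ℝ → ℝ≥0∞} (hw : IsMuckenhoupt p A w) {f : ℝ → ℝ≥0∞} (hf : Measurable f) :
    ∫⁻ x, maximal volume f x ^ p * w x ≤ muckenhouptConst p A * ∫⁻ x, f x ^ p * w x := by
  have hconj := Real.HolderConjugate.conjExponent hp
  have hσ := hw.dualWeight hp
  set p' := p.conjExponent with hp'
  set σ := dualWeight p w with hσ_eq
  set g := maximal (volume.withDensity σ) fun z => (σ z)⁻¹ * f z
  have hg : Measurable g := measurable_maximal _ _
  set h := maximal (volume.withDensity w) fun y => (w y)⁻¹ * g y ^ (p - 1)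
  have hh : Measurable h := measurable_maximal _ _
  have hpp' : (p - 1) * p' = p := hconj.sub_one_mul_conj
  have hdual (x : ℝ) : w x ^ (1 - p') = σ x := by rw [hp', one_sub_conjExponent hp]; rfl
  have hdual' (x : ℝ) : σ x ^ (1 - p) = w x := by
    rw [hσ_eq, dualWeight, ENNReal.rpow_inv_rpow (by linarith)]
  calc ∫⁻ x, maximal volume f x ^ p * w x ≤ ∫⁻ x, A ^ p' * (h x ^ p' * w x) := by
        refine lintegral_mono fun x => ?_
        rw [← mul_assoc, ← ENNReal.mul_rpow_of_nonneg _ _ hconj.symm.nonneg]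
        nth_rw 1 [← hpp']
        rw [ENNReal.rpow_mul]
        have := hconj.symm.nonneg
        gcongr
        exact hw.maximal_rpow_le hp hA hf x
    _ = A ^ p' * ∫⁻ x, h x ^ p' * w x :=
        lintegral_const_mul _ (f := fun x => h x ^ p' * w x) ((hh.pow_const _).mul hw.measurable)
    _ ≤ A ^ p' * (marcinkiewiczConst p' * ∫⁻ x, g x ^ p * σ x) := by
        gcongr
        refine (lintegral_maximal_withDensity_rpow_mul_le hconj.symm.lt hw.measurable hw.ae_ne
          (hg.pow_const _)).trans_eq ?_
        simp only [← ENNReal.rpow_mul, hpp', hdual]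
    _ ≤ A ^ p' * (marcinkiewiczConst p' * (marcinkiewiczConst p * ∫⁻ x, f x ^ p * w x)) := by
        gcongr
        refine (lintegral_maximal_withDensity_rpow_mul_le hp hσ.measurable hσ.ae_ne hf).trans_eq ?_
        simp only [hdual']
    _ = muckenhouptConst p A * ∫⁻ x, f x ^ p * w x := by rw [muckenhouptConst]; ring

/-- Muckenhoupt's class `A_1` of weights on the line, with constant `K`. -/
structure IsA1Weight (K : ℝ≥0∞) (u : ℝ → ℝ≥0∞) : Prop where
  measurable : Measurable u
  ae_ne : ∀ᵐ x, u x ≠ 0 ∧ u x ≠ ∞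
  maximal_le : ∀ᵐ x, maximal volume u x ≤ K * u x

namespace IsA1Weight

variable {K : ℝ≥0∞} {u v : ℝ → ℝ≥0∞}

lemma laverage_le (hu : IsA1Weight K u) (I : ℚ × ℚ) :
    ∀ᵐ x ∂volume.restrict (ratIoo I), ⨍⁻ y in ratIoo I, u y ∂volume ≤ K * u x := by
  filter_upwards [ae_restrict_of_ae hu.maximal_le, ae_restrict_mem (measurableSet_ratIoo I)]
    with x hx hxI using (laverage_ratIoo_le_maximal hxI).trans hx

lemma laverage_ne_zero (hu : IsA1Weight K u) {I : ℚ × ℚ} (hI : I.1 < I.2) :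
    ⨍⁻ x in ratIoo I, u x ∂volume ≠ 0 :=
  setLAverage_ne_zero (volume_ratIoo_ne_zero hI) (volume_ratIoo_ne_top I) hu.measurable
    (hu.ae_ne.mono fun _ => And.left)

lemma laverage_ne_top (hu : IsA1Weight K u) (hK : K ≠ ∞) {I : ℚ × ℚ} (hI : I.1 < I.2) :
    ⨍⁻ x in ratIoo I, u x ∂volume ≠ ∞ := by
  have : (ae (volume.restrict (ratIoo I))).NeBot := by
    rw [ae_neBot, Ne, Measure.restrict_eq_zero]
    exact volume_ratIoo_ne_zero hI
  obtain ⟨x, hx, hx_ne⟩ := ((hu.laverage_le I).and (ae_restrict_of_ae hu.ae_ne)).exists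
  exact ne_top_of_le_ne_top (ENNReal.mul_ne_top hK hx_ne.2) hx

lemma setLAverage_rpow_neg_mul_le (hu : IsA1Weight K u) (hK : K ≠ ∞) (hv : Measurable v) {s : ℝ}
    (hs : 0 ≤ s) {I : ℚ × ℚ} (hI : I.1 < I.2) :
    ⨍⁻ x in ratIoo I, u x ^ (-s) * v x ∂volume ≤
      K ^ s * (⨍⁻ x in ratIoo I, u x ∂volume) ^ (-s) * ⨍⁻ x in ratIoo I, v x ∂volume := by
  set c := ⨍⁻ x in ratIoo I, u x ∂volume
  have hc0 : c ≠ 0 := hu.laverage_ne_zero hI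
  have hctop : c ≠ ∞ := hu.laverage_ne_top hK hI
  calc ⨍⁻ x in ratIoo I, u x ^ (-s) * v x ∂volume
      ≤ ⨍⁻ x in ratIoo I, K ^ s * c ^ (-s) * v x ∂volume := by
        refine lintegral_mono_ae (Measure.ae_smul_measure ?_ _)
        filter_upwards [hu.laverage_le I] with x hx
        have hinv : (u x)⁻¹ ≤ K / c := by
          rw [ENNReal.le_div_iff_mul_le (.inl hc0) (.inl hctop), mul_comm, ← div_eq_mul_inv]
          exact ENNReal.div_le_of_le_mul hx
        gcongr
        rw [ENNReal.rpow_neg, ← ENNReal.inv_rpow, ENNReal.rpow_neg, ← div_eq_mul_inv,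
          ← ENNReal.div_rpow_of_nonneg _ _ hs]
        gcongr
    _ = K ^ s * c ^ (-s) * ⨍⁻ x in ratIoo I, v x ∂volume := lintegral_const_mul _ hv

end IsA1Weight

-- The easy half of Jones' factorization theorem.
lemma isMuckenhoupt_mul_of_isA1Weight {p : ℝ} (hp : 1 < p) {K : ℝ≥0∞} (hK : K ≠ ∞)
    {u v : ℝ → ℝ≥0∞} (hu : IsA1Weight K u) (hv : IsA1Weight K v) :
    IsMuckenhoupt p (K ^ p) fun x => u x ^ (1 - p) * v x where
  measurable := (hu.measurable.pow_const _).mul hv.measurable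
  ae_ne := by
    filter_upwards [ae_rpow_ne hu.ae_ne (1 - p), hv.ae_ne] with x hux hvx
    exact ⟨mul_ne_zero hux.1 hvx.1, ENNReal.mul_ne_top hux.2 hvx.2⟩
  laverage_mul_le I hI := by
    have hp1 : 0 < p - 1 := by linarith
    have hdual : ∀ᵐ x, dualWeight p (fun x => u x ^ (1 - p) * v x) x =
        v x ^ (-(p - 1)⁻¹) * u x := by
      filter_upwards [ae_rpow_ne hu.ae_ne (1 - p), hv.ae_ne] with x hux hvx
      rw [dualWeight, ENNReal.mul_rpow_of_ne_zero hux.1 hvx.1,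
        ENNReal.rpow_rpow_inv (by linarith), ← neg_sub, inv_neg, mul_comm]
    have hU := hu.laverage_ne_zero hI
    have hV := hv.laverage_ne_zero hI
    have hUV := hu.setLAverage_rpow_neg_mul_le hK hv.measurable hp1.le hI
    have hVU := hv.setLAverage_rpow_neg_mul_le hK hu.measurable (inv_nonneg.2 hp1.le) hI
    rw [setLAverage_congr_fun_ae (measurableSet_ratIoo I) (hdual.mono fun _ h _ => h)]
    set U := ⨍⁻ x in ratIoo I, u x ∂volume
    set V := ⨍⁻ x in ratIoo I, v x ∂volume
    rw [neg_sub] at hUV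
    calc _ ≤ K ^ (p - 1) * U ^ (1 - p) * V * (K ^ (p - 1)⁻¹ * V ^ (-(p - 1)⁻¹) * U) ^ (p - 1) := by
          gcongr
      _ = K ^ (p - 1) * K * (U ^ (1 - p) * U ^ (p - 1)) * (V * V⁻¹) := by
          rw [ENNReal.mul_rpow_of_nonneg _ _ hp1.le, ENNReal.mul_rpow_of_nonneg _ _ hp1.le,
            ENNReal.rpow_inv_rpow hp1.ne', ← ENNReal.rpow_mul, neg_mul, inv_mul_cancel₀ hp1.ne',
            ENNReal.rpow_neg_one]
          ring
      _ = K ^ p := by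
          rw [rpow_sub_one_mul_self hp.le, ← ENNReal.rpow_add _ _ hU (hu.laverage_ne_top hK hI),
            ENNReal.mul_inv_cancel hV (hv.laverage_ne_top hK hI), sub_add_sub_cancel, sub_self,
            ENNReal.rpow_zero, mul_one, mul_one]

/-! ### The Rubio de Francia algorithm -/

lemma maximal_ne_zero {μ : Measure ℝ} [IsLocallyFiniteMeasure μ] {f : ℝ → ℝ≥0∞}
    (hf : Measurable f) (hf0 : ¬∀ᵐ x ∂μ, f x = 0) (x : ℝ) : maximal μ f x ≠ 0 := fun h => by
  refine hf0 ?_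
  have hI (I : ℚ × ℚ) : ∀ᵐ y ∂μ, x ∈ ratIoo I → y ∈ ratIoo I → f y = 0 := by
    by_cases hx : x ∈ ratIoo I
    · have hI_top : μ (ratIoo I) ≠ ∞ := measure_Ioo_lt_top.ne
      have hav := (laverage_ratIoo_le_maximal (μ := μ) (f := f) hx).trans h.le
      rw [setLAverage_eq, nonpos_iff_eq_zero, ENNReal.div_eq_zero_iff,
        or_iff_left hI_top, lintegral_eq_zero_iff hf, EventuallyEq,
        ae_restrict_iff' (measurableSet_ratIoo I)] at hav
      exact hav.mono fun y hy _ => hy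
    · exact .of_forall fun y hx' => absurd hx' hx
  filter_upwards [ae_all_iff.2 hI] with y hy
  obtain ⟨a, ha⟩ := exists_rat_lt (min x y)
  obtain ⟨b, hb⟩ := exists_rat_gt (max x y)
  rw [lt_min_iff] at ha
  rw [max_lt_iff] at hb
  exact hy (a, b) ⟨ha.1, hb.1⟩ ⟨ha.2, hb.2⟩

/-- Rubio de Francia's majorant `∑ e^k M^k h` of `h`, where `M` is the maximal operator of Lebesgue
measure. It is used to dominate `h` by an `A_1` weight of comparable norm. -/
def maximalMajorant (e : ℝ≥0∞) (h : ℝ → ℝ≥0∞) (x : ℝ) : ℝ≥0∞ :=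
  ∑' k : ℕ, e ^ k * (maximal volume)^[k] h x

section maximalMajorant

variable {e : ℝ≥0∞} {h : ℝ → ℝ≥0∞}

lemma measurable_iterate_maximal (hh : Measurable h) : ∀ k, Measurable ((maximal volume)^[k] h)
  | 0 => hh
  | k + 1 => by
    rw [Function.iterate_succ_apply']
    exact measurable_maximal _ _

lemma measurable_maximalMajorant (hh : Measurable h) : Measurable (maximalMajorant e h) :=
  .tsum fun k => (measurable_iterate_maximal hh k).const_mul _

lemma pow_mul_iterate_maximal_le (k : ℕ) (x : ℝ) :
    e ^ k * (maximal volume)^[k] h x ≤ maximalMajorant e h x :=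
  ENNReal.le_tsum (f := fun k => e ^ k * (maximal volume)^[k] h x) k

lemma le_maximalMajorant (x : ℝ) : h x ≤ maximalMajorant e h x := by
  simpa using pow_mul_iterate_maximal_le 0 x

lemma maximal_maximalMajorant_le (hh : Measurable h) (he0 : e ≠ 0) (he : e ≠ ∞) (x : ℝ) :
    maximal volume (maximalMajorant e h) x ≤ e⁻¹ * maximalMajorant e h x := by
  have hm := measurable_iterate_maximal hh
  calc maximal volume (maximalMajorant e h) x
      ≤ ∑' k, maximal volume (fun y => e ^ k * (maximal volume)^[k] h y) x :=
        maximal_tsum_le fun k => (hm k).const_mul _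
    _ ≤ ∑' k : ℕ, e⁻¹ * (e ^ (k + 1) * (maximal volume)^[k + 1] h x) := by
        refine ENNReal.tsum_le_tsum fun k => (maximal_const_mul_le _ (hm k)).trans_eq ?_
        rw [Function.iterate_succ_apply', pow_succ', mul_assoc, ENNReal.inv_mul_cancel_left he0 he]
    _ ≤ e⁻¹ * maximalMajorant e h x := by
        rw [ENNReal.tsum_mul_left]
        gcongr
        exact ENNReal.tsum_comp_le_tsum_of_injective Nat.succ_injective
          fun k => e ^ k * (maximal volume)^[k] h x

lemma maximalMajorant_ne_zero (hh : Measurable h) (hh0 : ¬∀ᵐ x, h x = 0) (he0 : e ≠ 0) (x : ℝ) :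
    maximalMajorant e h x ≠ 0 := fun h0 => by
  have hle := (pow_mul_iterate_maximal_le (e := e) (h := h) 1 x).trans h0.le
  simp [he0, maximal_ne_zero hh hh0 x] at hle

variable {p : ℝ} {N : ℝ≥0∞} {w : ℝ → ℝ≥0∞}

lemma lintegral_iterate_maximal_rpow_mul_le (hh : Measurable h)
    (hM : ∀ f, Measurable f → ∫⁻ x, maximal volume f x ^ p * w x ≤ N * ∫⁻ x, f x ^ p * w x) :
    ∀ k, ∫⁻ x, (maximal volume)^[k] h x ^ p * w x ≤ N ^ k * ∫⁻ x, h x ^ p * w x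
  | 0 => by simp
  | k + 1 => by
    rw [Function.iterate_succ_apply', pow_succ', mul_assoc]
    refine (hM _ (measurable_iterate_maximal hh k)).trans ?_
    gcongr
    exact lintegral_iterate_maximal_rpow_mul_le hh hM k

lemma lintegral_maximalMajorant_rpow_mul_le (hp : 0 < p) (hh : Measurable h) (hw : Measurable w)
    (hM : ∀ f, Measurable f → ∫⁻ x, maximal volume f x ^ p * w x ≤ N * ∫⁻ x, f x ^ p * w x)
    {t : ℝ≥0∞} (ht : t ^ p * N ≤ 2⁻¹) :
    ∫⁻ x, maximalMajorant (2⁻¹ * t) h x ^ p * w x ≤ 2 ^ p * 2 * ∫⁻ x, h x ^ p * w x := by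
  set m : ℕ → ℝ → ℝ≥0∞ := fun k => (maximal volume)^[k] h
  have hm : ∀ k, Measurable (m k) := measurable_iterate_maximal hh
  have hgeom : ∑' k : ℕ, (2⁻¹ : ℝ≥0∞) ^ k = 2 := by
    rw [ENNReal.tsum_geometric, ENNReal.one_sub_inv_two, inv_inv]
  have hpt (x : ℝ) : maximalMajorant (2⁻¹ * t) h x ^ p * w x ≤
      2 ^ p * ∑' k, (t ^ p) ^ k * (m k x ^ p * w x) := by
    calc _ = (∑' k : ℕ, 2⁻¹ ^ k * (t ^ k * m k x)) ^ p * w x := by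
          simp only [maximalMajorant, mul_pow, mul_assoc, m]
      _ ≤ 2 ^ p * (∑' k : ℕ, (t ^ k * m k x) ^ p) * w x := by
          gcongr
          exact (tsum_mul_rpow_le _ _ hp).trans_eq (by rw [hgeom])
      _ = 2 ^ p * ∑' k, (t ^ p) ^ k * (m k x ^ p * w x) := by
          rw [mul_assoc, ← ENNReal.tsum_mul_right]
          simp only [ENNReal.mul_rpow_of_nonneg _ _ hp.le, mul_assoc,
            ← ENNReal.rpow_natCast, ← ENNReal.rpow_mul, mul_comm p]
  have hmw (k : ℕ) : Measurable fun x => m k x ^ p * w x := ((hm k).pow_const _).mul hw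
  calc ∫⁻ x, maximalMajorant (2⁻¹ * t) h x ^ p * w x
      ≤ ∫⁻ x, 2 ^ p * ∑' k, (t ^ p) ^ k * (m k x ^ p * w x) := lintegral_mono hpt
    _ = 2 ^ p * ∑' k : ℕ, (t ^ p) ^ k * ∫⁻ x, m k x ^ p * w x := by
        rw [lintegral_const_mul _ (.tsum fun k => (hmw k).const_mul _),
          lintegral_tsum fun k => ((hmw k).const_mul _).aemeasurable]
        congr! 3 with k
        exact lintegral_const_mul _ (hmw k)
    _ ≤ 2 ^ p * ∑' k : ℕ, 2⁻¹ ^ k * ∫⁻ x, h x ^ p * w x := by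
        refine mul_le_mul_right (ENNReal.tsum_le_tsum fun k => ?_) _
        calc _ ≤ (t ^ p) ^ k * (N ^ k * ∫⁻ x, h x ^ p * w x) := by
              gcongr
              exact lintegral_iterate_maximal_rpow_mul_le hh hM k
          _ ≤ 2⁻¹ ^ k * ∫⁻ x, h x ^ p * w x := by
              rw [← mul_assoc, ← mul_pow]
              gcongr
    _ = 2 ^ p * 2 * ∫⁻ x, h x ^ p * w x := by rw [ENNReal.tsum_mul_right, hgeom, mul_assoc]

end maximalMajorant

/-- The `A_1` constant of the majorants that the Rubio de Francia algorithm produces from an `A_p`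
weight with constant `A`. -/
def majorantConst (p : ℝ) (A : ℝ≥0∞) : ℝ≥0∞ := 4 * max 1 (muckenhouptConst p A)

lemma majorantConst_ne_top {p : ℝ} (hp : 1 < p) {A : ℝ≥0∞} (hA : A ≠ ∞) : majorantConst p A ≠ ∞ :=
  ENNReal.mul_ne_top (by norm_num) (max_lt ENNReal.one_lt_top
    (muckenhouptConst_ne_top hp hA).lt_top).ne

lemma inv_two_mul_max_rpow_mul_le {p : ℝ} (hp : 1 ≤ p) {N : ℝ≥0∞} (hN : N ≠ ∞) :
    (2 * max 1 N)⁻¹ ^ p * N ≤ 2⁻¹ := by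
  have h1 : 1 ≤ max 1 N := le_max_left 1 N
  calc (2 * max 1 N)⁻¹ ^ p * N ≤ (2 * max 1 N)⁻¹ ^ (1 : ℝ) * max 1 N := by
        gcongr ?_ * ?_
        · exact ENNReal.rpow_le_rpow_of_exponent_ge
            (ENNReal.inv_le_one.2 (one_le_mul one_le_two h1)) hp
        · exact le_max_right _ _
    _ = 2⁻¹ := by
      rw [ENNReal.rpow_one, ENNReal.mul_inv (by norm_num) (by norm_num), mul_assoc,
        ENNReal.inv_mul_cancel (zero_lt_one.trans_le h1).ne' (max_lt ENNReal.one_lt_top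
          hN.lt_top).ne, mul_one]

theorem IsMuckenhoupt.exists_isA1Weight_ge {p : ℝ} (hp : 1 < p) {A : ℝ≥0∞} (hA : A ≠ ∞)
    {w : ℝ → ℝ≥0∞} (hw : IsMuckenhoupt p A w) {h : ℝ → ℝ≥0∞} (hh : Measurable h)
    (hh0 : ¬∀ᵐ x, h x = 0) (hfin : ∫⁻ x, h x ^ p * w x ≠ ∞) :
    ∃ H, IsA1Weight (majorantConst p A) H ∧ (∀ x, h x ≤ H x) ∧
      ∫⁻ x, H x ^ p * w x ≤ 2 ^ p * 2 * ∫⁻ x, h x ^ p * w x := by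
  have hN := muckenhouptConst_ne_top hp hA
  set t : ℝ≥0∞ := (2 * max 1 (muckenhouptConst p A))⁻¹ with ht
  have he : (2⁻¹ * t)⁻¹ = majorantConst p A := by
    rw [ht, ← ENNReal.mul_inv (by norm_num) (by norm_num), inv_inv, majorantConst, ← mul_assoc]
    congr 1
    norm_num
  have he0 : 2⁻¹ * t ≠ 0 :=
    ENNReal.inv_ne_top.1 (he ▸ majorantConst_ne_top hp hA)
  have he_top : 2⁻¹ * t ≠ ∞ :=
    ENNReal.mul_ne_top (by norm_num) (ENNReal.inv_ne_top.2 (by simp))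
  have hint := lintegral_maximalMajorant_rpow_mul_le (zero_lt_one.trans hp) hh hw.measurable
    (fun f hf => hw.lintegral_maximal_rpow_mul_le hp hA hf) (inv_two_mul_max_rpow_mul_le hp.le hN)
  rw [← ht] at hint
  have hmeas := measurable_maximalMajorant (e := 2⁻¹ * t) hh
  have hint_top := ne_top_of_le_ne_top (ENNReal.mul_ne_top (ENNReal.mul_ne_top
    (ENNReal.rpow_ne_top_of_nonneg (by linarith) (by norm_num)) (by norm_num)) hfin) hint
  refine ⟨_, ⟨hmeas, ?_, .of_forall fun x => ?_⟩, le_maximalMajorant, hint⟩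
  · filter_upwards [ae_lt_top ((hmeas.pow_const p).mul hw.measurable) hint_top, hw.ae_ne]
      with x hx hwx
    refine ⟨maximalMajorant_ne_zero hh hh0 he0 x, fun htop => hx.ne ?_⟩
    rw [Pi.mul_apply, htop, ENNReal.top_rpow_of_pos (by linarith), ENNReal.top_mul hwx.1]
  · rw [← he]
    exact maximal_maximalMajorant_le hh he0 he_top x

/-! ### Extrapolation -/

section Integral

variable {Y : Type*} [MeasurableSpace Y] {μ : Measure Y} {w : Y → ℝ≥0∞}

lemma lintegral_le_of_forall_le_ne_top [SigmaFinite μ] {f : Y → ℝ≥0∞} {B : ℝ≥0∞}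
    (h : ∀ g, Measurable g → (∀ x, g x ≤ f x) → ∫⁻ x, g x ∂μ ≠ ∞ → ∫⁻ x, g x ∂μ ≤ B) :
    ∫⁻ x, f x ∂μ ≤ B := by
  refine le_of_forall_lt fun L hL => ?_
  rw [lintegral_eq_nnreal] at hL
  obtain ⟨φ, hφ⟩ := lt_iSup_iff.1 hL
  obtain ⟨hφf, hLφ⟩ := lt_iSup_iff.1 hφ
  rw [← SimpleFunc.lintegral_eq_lintegral] at hLφ
  obtain ⟨g, hgφ, hg_top, hLg⟩ :=
    SimpleFunc.exists_lt_lintegral_simpleFunc_of_lt_lintegral (f := φ) hLφ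
  exact hLg.trans_le (h _ g.measurable.coe_nnreal_ennreal
    (fun x => (ENNReal.coe_le_coe.2 (hgφ x)).trans (hφf x)) hg_top.ne)

lemma lintegral_rpow_mul_le_of_forall_le_ne_top [SigmaFinite μ] (hw : Measurable w)
    (hw_ne : ∀ᵐ x ∂μ, w x ≠ 0 ∧ w x ≠ ∞) {s : ℝ} (hs : 0 < s) {f : Y → ℝ≥0∞} (hf : Measurable f)
    {B : ℝ≥0∞} (h : ∀ g, Measurable g → (∀ x, g x ≤ f x) → ∫⁻ x, g x ^ s * w x ∂μ ≠ ∞ →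
      ∫⁻ x, g x ^ s * w x ∂μ ≤ B) :
    ∫⁻ x, f x ^ s * w x ∂μ ≤ B := by
  have hdens {g : Y → ℝ≥0∞} (hg : Measurable g) :
      ∫⁻ x, g x ∂μ.withDensity w = ∫⁻ x, g x * w x ∂μ := by
    simpa only [Pi.mul_apply, mul_comm (w _)] using lintegral_withDensity_eq_lintegral_mul μ hw hg
  have : SigmaFinite (μ.withDensity w) :=
    SigmaFinite.withDensity_of_ne_top (hw_ne.mono fun _ => And.right)
  rw [← hdens (hf.pow_const s)]
  refine lintegral_le_of_forall_le_ne_top fun g hg hgf hg_top => ?_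
  have hroot : ∫⁻ x, (g x ^ s⁻¹) ^ s * w x ∂μ = ∫⁻ x, g x ∂μ.withDensity w := by
    simp only [ENNReal.rpow_inv_rpow hs.ne', hdens hg]
  rw [← hroot] at hg_top ⊢
  refine h _ (hg.pow_const _) (fun x => ?_) hg_top
  rw [ENNReal.rpow_inv_le_iff hs]
  exact hgf x

lemma rpow_inv_mul_rpow_one_sub_inv {r : ℝ} (hr : 1 ≤ r) {u : ℝ≥0∞} (hu : u ≠ 0) (hu' : u ≠ ∞)
    (a v : ℝ≥0∞) : (a ^ r * (u ^ (1 - r) * v)) ^ r⁻¹ * (u * v) ^ (1 - r⁻¹) = a * v := by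
  have hr0 : 0 < r := by linarith
  have hinv : 0 ≤ 1 - r⁻¹ := sub_nonneg.2 (inv_le_one_of_one_le₀ hr)
  have hupow : (u ^ (1 - r)) ^ r⁻¹ * u ^ (1 - r⁻¹) = 1 := by
    rw [← ENNReal.rpow_mul, ← ENNReal.rpow_add _ _ hu hu', sub_mul, mul_inv_cancel₀ hr0.ne',
      one_mul, sub_add_sub_cancel, sub_self, ENNReal.rpow_zero]
  have hvpow : v ^ r⁻¹ * v ^ (1 - r⁻¹) = v := by
    rw [← ENNReal.rpow_add_of_nonneg _ _ (inv_nonneg.2 hr0.le) hinv, add_sub_cancel,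
      ENNReal.rpow_one]
  calc (a ^ r * (u ^ (1 - r) * v)) ^ r⁻¹ * (u * v) ^ (1 - r⁻¹)
      = a * ((u ^ (1 - r)) ^ r⁻¹ * u ^ (1 - r⁻¹)) * (v ^ r⁻¹ * v ^ (1 - r⁻¹)) := by
        rw [ENNReal.mul_rpow_of_nonneg _ _ (inv_nonneg.2 hr0.le),
          ENNReal.mul_rpow_of_nonneg _ _ (inv_nonneg.2 hr0.le),
          ENNReal.mul_rpow_of_nonneg _ _ hinv, ENNReal.rpow_rpow_inv hr0.ne']
        ring
    _ = a * v := by rw [hupow, hvpow, mul_one]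

lemma lintegral_mul_le_rpow_mul_rpow_of_le {r : ℝ} (hr : 1 < r) {N : ℝ≥0∞}
    {F G U V : Y → ℝ≥0∞} (hG : Measurable G) (hU : Measurable U) (hV : Measurable V)
    (hU_ne : ∀ᵐ x ∂μ, U x ≠ 0 ∧ U x ≠ ∞) (hFU : ∀ x, F x ≤ U x)
    (h : ∫⁻ x, G x ^ r * (U x ^ (1 - r) * V x) ∂μ ≤
      N * ∫⁻ x, F x ^ r * (U x ^ (1 - r) * V x) ∂μ) :
    ∫⁻ x, G x * V x ∂μ ≤ N ^ r⁻¹ * ∫⁻ x, U x * V x ∂μ := by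
  have hr0 : 0 < r := by linarith
  have hinv : 0 ≤ 1 - r⁻¹ := sub_nonneg.2 (inv_le_one_of_one_le₀ hr.le)
  have hFU_int : ∫⁻ x, F x ^ r * (U x ^ (1 - r) * V x) ∂μ ≤ ∫⁻ x, U x * V x ∂μ := by
    refine lintegral_mono_ae (hU_ne.mono fun x hx => ?_)
    calc _ ≤ U x ^ r * (U x ^ (1 - r) * V x) := by gcongr; exact hFU x
      _ = U x * V x := by
          rw [← mul_assoc, ← ENNReal.rpow_add _ _ hx.1 hx.2, add_sub_cancel, ENNReal.rpow_one]
  calc ∫⁻ x, G x * V x ∂μ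
      = ∫⁻ x, (G x ^ r * (U x ^ (1 - r) * V x)) ^ r⁻¹ * (U x * V x) ^ (1 - r⁻¹) ∂μ :=
        lintegral_congr_ae (hU_ne.mono fun x hx =>
          (rpow_inv_mul_rpow_one_sub_inv hr.le hx.1 hx.2 (G x) (V x)).symm)
    _ ≤ (∫⁻ x, G x ^ r * (U x ^ (1 - r) * V x) ∂μ) ^ r⁻¹ *
          (∫⁻ x, U x * V x ∂μ) ^ (1 - r⁻¹) :=
        ENNReal.lintegral_mul_norm_pow_le
          ((hG.pow_const _).mul ((hU.pow_const _).mul hV)).aemeasurable (hU.mul hV).aemeasurable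
          (inv_nonneg.2 hr0.le) hinv (add_sub_cancel _ _)
    _ ≤ (N * ∫⁻ x, U x * V x ∂μ) ^ r⁻¹ * (∫⁻ x, U x * V x ∂μ) ^ (1 - r⁻¹) := by
        gcongr
        exact h.trans (by gcongr)
    _ = N ^ r⁻¹ * ∫⁻ x, U x * V x ∂μ := by
        rw [ENNReal.mul_rpow_of_nonneg _ _ (inv_nonneg.2 hr0.le), mul_assoc,
          ← ENNReal.rpow_add_of_nonneg _ _ (inv_nonneg.2 hr0.le) hinv, add_sub_cancel,
          ENNReal.rpow_one]

lemma le_rpow_mul_of_le_mul_rpow_mul_rpow {s : ℝ} (hs : 1 < s) {T a b : ℝ≥0∞} (hb : b ≠ ∞)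
    (h : b ≤ T * a ^ s⁻¹ * b ^ (1 - s⁻¹)) : b ≤ T ^ s * a := by
  have hs0 : 0 < s := by linarith
  rcases eq_or_ne b 0 with rfl | hb0
  · exact zero_le
  have hsplit : b = b ^ s⁻¹ * b ^ (1 - s⁻¹) := by
    rw [← ENNReal.rpow_add _ _ hb0 hb, add_sub_cancel, ENNReal.rpow_one]
  nth_rw 1 [hsplit] at h
  rw [ENNReal.mul_le_mul_iff_left (ENNReal.rpow_pos (pos_iff_ne_zero.2 hb0) hb).ne'
    (ENNReal.rpow_ne_top_of_ne_zero hb0 hb), ENNReal.rpow_inv_le_iff hs0,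
    ENNReal.mul_rpow_of_nonneg _ _ hs0.le, ENNReal.rpow_inv_rpow hs0.ne'] at h
  exact h

lemma lintegral_rpow_mul_eq_zero_iff {f : Y → ℝ≥0∞} (hf : Measurable f) (hw : Measurable w)
    (hw_ne : ∀ᵐ x ∂μ, w x ≠ 0 ∧ w x ≠ ∞) {s : ℝ} (hs : 0 < s) :
    ∫⁻ x, f x ^ s * w x ∂μ = 0 ↔ ∀ᵐ x ∂μ, f x = 0 := by
  rw [lintegral_eq_zero_iff (f := fun x => f x ^ s * w x) ((hf.pow_const _).mul hw)]
  refine eventually_congr (hw_ne.mono fun x hx => ?_)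
  simp [hx.1, ENNReal.rpow_eq_zero_iff_of_pos hs]

end Integral

section dualWeight

variable {s : ℝ} {w : ℝ → ℝ≥0∞}

lemma lintegral_mul_le_rpow_mul_rpow_dualWeight (hs : 1 < s) (hw : Measurable w)
    (hw_ne : ∀ᵐ x, w x ≠ 0 ∧ w x ≠ ∞) {f g : ℝ → ℝ≥0∞} (hf : Measurable f) (hg : Measurable g) :
    ∫⁻ x, f x * g x ≤ (∫⁻ x, f x ^ s * w x) ^ s⁻¹ *
      (∫⁻ x, g x ^ s.conjExponent * dualWeight s w x) ^ s.conjExponent⁻¹ := by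
  have hconj := Real.HolderConjugate.conjExponent hs
  set s' := s.conjExponent
  calc ∫⁻ x, f x * g x
      = ∫⁻ x, (f x ^ s * w x) ^ s⁻¹ * (g x ^ s' * dualWeight s w x) ^ s'⁻¹ := by
        refine lintegral_congr_ae (hw_ne.mono fun x hx => ?_)
        have hexp : (1 - s)⁻¹ * s'⁻¹ = -s⁻¹ := by
          have : 1 - s ≠ 0 := by linarith
          have := hconj.ne_zero
          rw [← hconj.one_sub_inv]
          field_simp
          ring
        have hwpow : w x ^ s⁻¹ * (w x ^ (1 - s)⁻¹) ^ s'⁻¹ = 1 := by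
          rw [← ENNReal.rpow_mul, hexp, ← ENNReal.rpow_add _ _ hx.1 hx.2, add_neg_cancel,
            ENNReal.rpow_zero]
        simp only [dualWeight]
        rw [ENNReal.mul_rpow_of_nonneg _ _ hconj.inv_nonneg,
          ENNReal.mul_rpow_of_nonneg _ _ hconj.symm.inv_nonneg, ENNReal.rpow_rpow_inv hconj.ne_zero,
          ENNReal.rpow_rpow_inv hconj.symm.ne_zero, mul_mul_mul_comm, hwpow, mul_one]
    _ ≤ _ := ENNReal.lintegral_mul_norm_pow_le ((hf.pow_const _).mul hw).aemeasurable
        ((hg.pow_const _).mul (hw.pow_const _)).aemeasurable hconj.inv_nonneg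
        hconj.symm.inv_nonneg hconj.inv_add_inv_eq_one

lemma lintegral_rpow_mul_dualWeight (hs : 1 < s) (hw_ne : ∀ᵐ x, w x ≠ 0 ∧ w x ≠ ∞)
    (g : ℝ → ℝ≥0∞) :
    ∫⁻ x, (g x ^ (s - 1) * w x) ^ s.conjExponent * dualWeight s w x = ∫⁻ x, g x ^ s * w x := by
  have hconj := Real.HolderConjugate.conjExponent hs
  refine lintegral_congr_ae (hw_ne.mono fun x hx => ?_)
  simp only [dualWeight]
  rw [ENNReal.mul_rpow_of_nonneg _ _ hconj.symm.nonneg, mul_assoc, ← ENNReal.rpow_mul,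
    hconj.sub_one_mul_conj, ← ENNReal.rpow_add _ _ hx.1 hx.2, ← one_sub_conjExponent hs,
    add_sub_cancel, ENNReal.rpow_one]

end dualWeight

lemma isMuckenhoupt_one (p : ℝ) : IsMuckenhoupt p 1 fun _ => 1 where
  measurable := measurable_const
  ae_ne := by simp
  laverage_mul_le I hI := by
    have : IsFiniteMeasure (volume.restrict (ratIoo I)) :=
      ⟨by simpa using (volume_ratIoo_ne_top I).lt_top⟩
    have : NeZero (volume.restrict (ratIoo I)) :=
      ⟨by simpa [Measure.restrict_eq_zero] using volume_ratIoo_ne_zero hI⟩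
    simp [dualWeight, laverage_const]

lemma IsMuckenhoupt.mono {p : ℝ} {A B : ℝ≥0∞} {w : ℝ → ℝ≥0∞} (hw : IsMuckenhoupt p A w)
    (h : A ≤ B) : IsMuckenhoupt p B w :=
  ⟨hw.measurable, hw.ae_ne, fun I hI => (hw.laverage_mul_le I hI).trans h⟩

lemma IsA1Weight.mono {K L : ℝ≥0∞} {u : ℝ → ℝ≥0∞} (hu : IsA1Weight K u) (h : K ≤ L) :
    IsA1Weight L u :=
  ⟨hu.measurable, hu.ae_ne, hu.maximal_le.mono fun _ hx => hx.trans (by gcongr)⟩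

/-- The pairs `(F, G)` of the family `𝓕` satisfy `‖G‖_{L^r(w)} ≲ ‖F‖_{L^r(w)}` for all weights
`w ∈ A_r`, with a constant that depends on `w` only through its `A_r` constant. -/
def WeightedBound (𝓕 : Set ((ℝ → ℝ≥0∞) × (ℝ → ℝ≥0∞))) (r : ℝ) : Prop :=
  ∀ K ≠ ∞, ∃ N : ℝ≥0∞, N ≠ ∞ ∧ ∀ w, IsMuckenhoupt r K w → ∀ P ∈ 𝓕,
    ∫⁻ x, P.2 x ^ r * w x ≤ N * ∫⁻ x, P.1 x ^ r * w x

/-- The `A_1` constant of the weights to which extrapolation from `L^r` to `L^s` applies the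
hypothesis, when the target weight has `A_s` constant `K`. -/
def extrapolationConst (s : ℝ) (K : ℝ≥0∞) : ℝ≥0∞ :=
  max (majorantConst s K) (majorantConst s.conjExponent (K ^ (s.conjExponent - 1)))

lemma extrapolationConst_ne_top {s : ℝ} (hs : 1 < s) {K : ℝ≥0∞} (hK : K ≠ ∞) :
    extrapolationConst s K ≠ ∞ := by
  have hs' := (Real.HolderConjugate.conjExponent hs).symm
  exact (max_lt (majorantConst_ne_top hs hK).lt_top (majorantConst_ne_top hs'.lt
    (ENNReal.rpow_ne_top_of_nonneg hs'.sub_one_pos.le hK)).lt_top).ne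

lemma two_rpow_mul_rpow_inv_mul_of_holderConjugate {s s' : ℝ} (h : s.HolderConjugate s')
    (a b : ℝ≥0∞) :
    (2 ^ s * 2 * a) ^ s⁻¹ * (2 ^ s' * 2 * b) ^ s'⁻¹ = 8 * (a ^ s⁻¹ * b ^ s'⁻¹) := by
  have htwo : (2 : ℝ≥0∞) ^ s⁻¹ * 2 ^ s'⁻¹ = 2 := by
    rw [← ENNReal.rpow_add_of_nonneg _ _ h.inv_nonneg h.symm.inv_nonneg, h.inv_add_inv_eq_one,
      ENNReal.rpow_one]
  simp only [ENNReal.mul_rpow_of_nonneg _ _ h.inv_nonneg,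
    ENNReal.mul_rpow_of_nonneg _ _ h.symm.inv_nonneg, ENNReal.rpow_rpow_inv h.ne_zero,
    ENNReal.rpow_rpow_inv h.symm.ne_zero]
  calc _ = 2 * 2 * (2 ^ s⁻¹ * 2 ^ s'⁻¹) * (a ^ s⁻¹ * b ^ s'⁻¹) := by ring
    _ = 8 * (a ^ s⁻¹ * b ^ s'⁻¹) := by
        rw [htwo]
        ring

-- The bound is dualized: `∫ g ^ s w = ∫ g h` with `h = g ^ (s - 1) w`, and `F` and `h` are replaced
-- by `A_1` majorants `U` and `V`, so that the hypothesis applies with the weight `U ^ (1 - r) V`.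
lemma lintegral_rpow_mul_le_of_extrapolation {r s : ℝ} (hr : 1 < r) (hs : 1 < s) {K N : ℝ≥0∞}
    (hK : K ≠ ∞) {w : ℝ → ℝ≥0∞} (hw : IsMuckenhoupt s K w) {F G g : ℝ → ℝ≥0∞}
    (hF : Measurable F) (hG : Measurable G)
    (hFG : ∀ v, IsMuckenhoupt r (extrapolationConst s K ^ r) v →
      ∫⁻ x, G x ^ r * v x ≤ N * ∫⁻ x, F x ^ r * v x)
    (hF0 : ¬∀ᵐ x, F x = 0) (hF_top : ∫⁻ x, F x ^ s * w x ≠ ∞)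
    (hg : Measurable g) (hgG : ∀ x, g x ≤ G x) (hg_top : ∫⁻ x, g x ^ s * w x ≠ ∞) :
    ∫⁻ x, g x ^ s * w x ≤ (8 * N ^ r⁻¹) ^ s * ∫⁻ x, F x ^ s * w x := by
  have hconj := Real.HolderConjugate.conjExponent hs
  have hdual := lintegral_rpow_mul_dualWeight hs hw.ae_ne g
  have hσ := hw.dualWeight hs
  have hh : Measurable fun x => g x ^ (s - 1) * w x := (hg.pow_const _).mul hw.measurable
  have hc := extrapolationConst_ne_top hs hK
  set s' := s.conjExponent
  rcases em (∀ᵐ x, g x ^ (s - 1) * w x = 0) with hh0 | hh0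
  · rw [← lintegral_rpow_mul_eq_zero_iff hh hσ.measurable hσ.ae_ne hconj.symm.pos, hdual] at hh0
    exact hh0.trans_le zero_le
  obtain ⟨U, hU, hFU, hU_int⟩ := hw.exists_isA1Weight_ge hs hK hF hF0 hF_top
  obtain ⟨V, hV, hhV, hV_int⟩ := hσ.exists_isA1Weight_ge hconj.symm.lt
    (ENNReal.rpow_ne_top_of_nonneg hconj.symm.sub_one_pos.le hK) hh hh0 (hdual.trans_ne hg_top)
  rw [hdual] at hV_int
  refine le_rpow_mul_of_le_mul_rpow_mul_rpow hs hg_top ?_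
  rw [hconj.one_sub_inv]
  set a := ∫⁻ x, F x ^ s * w x
  set b := ∫⁻ x, g x ^ s * w x
  calc b = ∫⁻ x, g x * (g x ^ (s - 1) * w x) :=
        lintegral_congr fun x => by rw [← rpow_sub_one_mul_self hs.le]; ring
    _ ≤ ∫⁻ x, G x * V x := by
        gcongr with x
        · exact hgG x
        · exact hhV x
    _ ≤ N ^ r⁻¹ * ∫⁻ x, U x * V x :=
        lintegral_mul_le_rpow_mul_rpow_of_le hr hG hU.measurable hV.measurable hU.ae_ne hFU
          (hFG _ (isMuckenhoupt_mul_of_isA1Weight hr hc (hU.mono (le_max_left _ _))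
            (hV.mono (le_max_right _ _))))
    _ ≤ N ^ r⁻¹ * ((2 ^ s * 2 * a) ^ s⁻¹ * (2 ^ s' * 2 * b) ^ s'⁻¹) := by
        gcongr
        refine (lintegral_mul_le_rpow_mul_rpow_dualWeight hs hw.measurable hw.ae_ne hU.measurable
          hV.measurable).trans ?_
        have := hconj.inv_nonneg
        have := hconj.symm.inv_nonneg
        gcongr
    _ = 8 * N ^ r⁻¹ * a ^ s⁻¹ * b ^ s'⁻¹ := by
        rw [two_rpow_mul_rpow_inv_mul_of_holderConjugate hconj]
        ring

theorem WeightedBound.extrapolate {𝓕 : Set ((ℝ → ℝ≥0∞) × (ℝ → ℝ≥0∞))}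
    (hm : ∀ P ∈ 𝓕, Measurable P.1 ∧ Measurable P.2) {r s : ℝ} (hr : 1 < r) (hs : 1 < s)
    (h : WeightedBound 𝓕 r) : WeightedBound 𝓕 s := fun K hK => by
  have hr0 : 0 < r := by linarith
  have hs0 : 0 < s := by linarith
  have hc := ENNReal.rpow_ne_top_of_nonneg hr0.le (extrapolationConst_ne_top hs hK)
  obtain ⟨N, hN, hbound⟩ := h (max 1 (extrapolationConst s K ^ r))
    (max_lt ENNReal.one_lt_top hc.lt_top).ne
  have hT : (8 * N ^ r⁻¹) ^ s ≠ ∞ := ENNReal.rpow_ne_top_of_nonneg hs0.le (ENNReal.mul_ne_top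
    (by norm_num) (ENNReal.rpow_ne_top_of_nonneg (inv_nonneg.2 hr0.le) hN))
  refine ⟨max 1 ((8 * N ^ r⁻¹) ^ s), (max_lt ENNReal.one_lt_top hT.lt_top).ne, ?_⟩
  rintro w hw ⟨F, G⟩ hP
  obtain ⟨hF, hG⟩ := hm _ hP
  simp only at hF hG ⊢
  rcases eq_or_ne (∫⁻ x, F x ^ s * w x) ∞ with hF_top | hF_top
  · rw [hF_top, ENNReal.mul_top (zero_lt_one.trans_le (le_max_left _ _)).ne']
    exact le_top
  rcases em (∀ᵐ x, F x = 0) with hF0 | hF0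
  · have hG0 := hbound _ ((isMuckenhoupt_one r).mono (le_max_left _ _)) _ hP
    rw [(lintegral_rpow_mul_eq_zero_iff hF measurable_const (by simp) hr0).2 hF0, mul_zero,
      nonpos_iff_eq_zero, lintegral_rpow_mul_eq_zero_iff hG measurable_const (by simp) hr0] at hG0
    rw [(lintegral_rpow_mul_eq_zero_iff hG hw.measurable hw.ae_ne hs0).2 hG0]
    exact zero_le
  refine lintegral_rpow_mul_le_of_forall_le_ne_top hw.measurable hw.ae_ne hs0 hG
    fun g hg hgG hg_top => ?_
  refine (lintegral_rpow_mul_le_of_extrapolation hr hs hK hw hF hG (fun v hv => ?_)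
    hF0 hF_top hg hgG hg_top).trans (mul_le_mul_left (le_max_right _ _) _)
  exact hbound v (hv.mono (le_max_right _ _)) _ hP

/-! ### Vector-valued maximal inequalities -/

section HasMaximalBound

variable {ι X Y : Type*} [MeasurableSpace X] [MeasurableSpace Y]

/-- The pairs `(t ↦ Φ i (f t), t ↦ Φ i (M f t))`, where `f` is a measurable family of functions on
`Y` with parameter `t ∈ ℝ` and the maximal operator `M` acts on the parameter. -/
def maximalPairs (Φ : ι → (Y → ℝ≥0∞) → ℝ≥0∞) : Set ((ℝ → ℝ≥0∞) × (ℝ → ℝ≥0∞)) :=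
  {P | ∃ (i : ι) (f : ℝ → Y → ℝ≥0∞), Measurable (Function.uncurry f) ∧
    P = (fun t => Φ i (f t), fun t => Φ i fun y => maximal volume (f · y) t)}

/-- The functionals `Φ i` preserve measurable dependence on a parameter, and the maximal operator
in a real parameter is bounded on the weighted spaces `L^r(w; Φ i)` for all `r > 1` and `w ∈ A_r`,
uniformly in `i`. -/
structure HasMaximalBound (Φ : ι → (Y → ℝ≥0∞) → ℝ≥0∞) : Prop where
  measurable_apply : ∀ (i : ι) {γ : Type} [MeasurableSpace γ] {f : γ → Y → ℝ≥0∞},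
    Measurable (Function.uncurry f) → Measurable fun c => Φ i (f c)
  weightedBound : ∀ r, 1 < r → WeightedBound (maximalPairs Φ) r

lemma hasMaximalBound_of_weightedBound {Φ : ι → (Y → ℝ≥0∞) → ℝ≥0∞}
    (hΦ : ∀ (i : ι) {γ : Type} [MeasurableSpace γ] {f : γ → Y → ℝ≥0∞},
      Measurable (Function.uncurry f) → Measurable fun c => Φ i (f c))
    {s : ℝ} (hs : 1 < s) (h : WeightedBound (maximalPairs Φ) s) : HasMaximalBound Φ where
  measurable_apply := hΦ
  weightedBound r hr := by
    refine h.extrapolate ?_ hs hr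
    rintro _ ⟨i, f, hf, rfl⟩
    exact ⟨hΦ i hf, hΦ i (measurable_maximal_uncurry hf)⟩

lemma hasMaximalBound_eval (y : Y) : HasMaximalBound fun (_ : Unit) (f : Y → ℝ≥0∞) => f y where
  measurable_apply _ _ _ _ hf := hf.comp (measurable_id.prodMk measurable_const)
  weightedBound r hr K hK := by
    refine ⟨muckenhouptConst r K, muckenhouptConst_ne_top hr hK, ?_⟩
    rintro w hw _ ⟨_, f, hf, rfl⟩
    exact hw.lintegral_maximal_rpow_mul_le hr hK (hf.comp (measurable_id.prodMk measurable_const))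

lemma lintegral_lintegral_rpow_mul {Z : Type*} [MeasurableSpace Z] {μ : Measure X} {ν : Measure Z}
    [SFinite μ] [SFinite ν] {g : X → Z → ℝ≥0∞} (hg : Measurable (Function.uncurry g))
    {w : X → ℝ≥0∞} (hw : Measurable w) {q : ℝ} (hq : q ≠ 0) :
    ∫⁻ x, ((∫⁻ z, g x z ^ q ∂ν) ^ q⁻¹) ^ q * w x ∂μ = ∫⁻ z, ∫⁻ x, g x z ^ q * w x ∂μ ∂ν := by
  have hmeas : Measurable (Function.uncurry fun x z => g x z ^ q * w x) :=
    (hg.pow_const q).mul (hw.comp measurable_fst)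
  rw [← lintegral_lintegral_swap hmeas.aemeasurable]
  refine lintegral_congr fun x => ?_
  have hgx : Measurable fun z => g x z ^ q :=
    (hg.comp (measurable_const.prodMk measurable_id)).pow_const q
  rw [ENNReal.rpow_inv_rpow hq, lintegral_mul_const _ hgx]

lemma HasMaximalBound.lintegral_rpow {Z : Type} [MeasurableSpace Z] {Φ : (Y → ℝ≥0∞) → ℝ≥0∞}
    (h : HasMaximalBound fun _ : Unit => Φ) {e : Y → Z → X} (he : Measurable (Function.uncurry e))
    (ν : ι → Measure Z) [∀ i, SFinite (ν i)] {q : ℝ} (hq : 1 < q) :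
    HasMaximalBound fun i (F : X → ℝ≥0∞) => (∫⁻ z, Φ (fun y => F (e y z)) ^ q ∂ν i) ^ q⁻¹ := by
  have hΦ {γ : Type} [MeasurableSpace γ] {f : γ → X → ℝ≥0∞} (hf : Measurable (Function.uncurry f)) :
      Measurable (Function.uncurry fun c z => Φ fun y => f c (e y z)) :=
    h.measurable_apply () (f := fun (c : γ × Z) y => f c.1 (e y c.2))
      (hf.comp (measurable_fst.fst.prodMk (he.comp (measurable_snd.prodMk measurable_fst.snd))))
  refine hasMaximalBound_of_weightedBound
    (fun i _ _ _ hf => ((hΦ hf).pow_const q).lintegral_prod_right'.pow_const _) hq fun K hK => ?_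
  obtain ⟨N, hN, hbound⟩ := h.weightedBound q hq K hK
  refine ⟨N, hN, ?_⟩
  rintro w hw _ ⟨i, f, hf, rfl⟩
  rw [lintegral_lintegral_rpow_mul (hΦ hf) hw.measurable (by linarith),
    lintegral_lintegral_rpow_mul (hΦ (f := fun t x => maximal volume (f · x) t)
      (measurable_maximal_uncurry hf)) hw.measurable (by linarith), ← lintegral_const_mul' _ _ hN]
  exact lintegral_mono fun z => hbound w hw _ ⟨(), fun t y => f t (e y z),
    hf.comp (measurable_fst.prodMk (he.comp (measurable_snd.prodMk measurable_const))), rfl⟩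

lemma lintegral_tsum_rpow_mul [Countable ι] {μ : Measure X} {g : ι → X → ℝ≥0∞}
    (hg : ∀ i, Measurable (g i)) {w : X → ℝ≥0∞} (hw : Measurable w) {c : ι → ℝ≥0∞}
    {p : ℝ} (hp : 0 < p) :
    ∫⁻ x, ((∑' i, (c i * g i x) ^ p) ^ p⁻¹) ^ p * w x ∂μ =
      ∑' i, c i ^ p * ∫⁻ x, g i x ^ p * w x ∂μ := by
  have hmeas (i : ι) : Measurable fun x => g i x ^ p * w x := ((hg i).pow_const p).mul hw
  simp only [ENNReal.rpow_inv_rpow hp.ne', ENNReal.mul_rpow_of_nonneg _ _ hp.le,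
    ← ENNReal.tsum_mul_right, mul_assoc]
  rw [lintegral_tsum fun i => ((hmeas i).const_mul _).aemeasurable]
  simp only [lintegral_const_mul _ (hmeas _)]

lemma HasMaximalBound.tsum_rpow [Countable ι] {Φ : ι → (Y → ℝ≥0∞) → ℝ≥0∞}
    (h : HasMaximalBound Φ) (c : ι → ℝ≥0∞) {p : ℝ} (hp : 1 < p) :
    HasMaximalBound fun (_ : Unit) F => (∑' i, (c i * Φ i F) ^ p) ^ p⁻¹ := by
  refine hasMaximalBound_of_weightedBound (fun _ _ _ _ hf => (Measurable.tsum fun i =>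
    ((h.measurable_apply i hf).const_mul _).pow_const p).pow_const _) hp fun K hK => ?_
  obtain ⟨N, hN, hbound⟩ := h.weightedBound p hp K hK
  refine ⟨N, hN, ?_⟩
  rintro w hw _ ⟨_, f, hf, rfl⟩
  have hp0 : 0 < p := by linarith
  rw [lintegral_tsum_rpow_mul (fun i => h.measurable_apply i hf) hw.measurable hp0,
    lintegral_tsum_rpow_mul (g := fun i t => Φ i fun y => maximal volume (f · y) t)
      (fun i => h.measurable_apply i (measurable_maximal_uncurry hf)) hw.measurable hp0,
    ← ENNReal.tsum_mul_left]
  refine ENNReal.tsum_le_tsum fun i => ?_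
  rw [mul_left_comm]
  exact mul_le_mul_right (hbound w hw _ ⟨i, f, hf, rfl⟩) _

end HasMaximalBound

/-! ### Power weights -/

namespace IsA1Weight

variable {K κ : ℝ≥0∞} {u v : ℝ → ℝ≥0∞}

lemma one (hK : 1 ≤ K) : IsA1Weight K fun _ => 1 where
  measurable := measurable_const
  ae_ne := .of_forall fun _ => by simp
  maximal_le := .of_forall fun _ => (maximal_const_le 1).trans (by simpa using hK)

lemma const_mul (hu : IsA1Weight K u) (h0 : κ ≠ 0) (htop : κ ≠ ∞) :
    IsA1Weight K fun x => κ * u x where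
  measurable := hu.measurable.const_mul κ
  ae_ne := hu.ae_ne.mono fun _ hx => ⟨mul_ne_zero h0 hx.1, ENNReal.mul_ne_top htop hx.2⟩
  maximal_le := hu.maximal_le.mono fun x hx => calc
    maximal volume (fun x => κ * u x) x ≤ κ * (K * u x) :=
      (maximal_const_mul_le κ hu.measurable).trans (mul_le_mul_right hx κ)
    _ = K * (κ * u x) := mul_left_comm ..

lemma add (hu : IsA1Weight K u) (hv : IsA1Weight K v) : IsA1Weight K fun x => u x + v x where
  measurable := hu.measurable.add hv.measurable
  ae_ne := by
    filter_upwards [hu.ae_ne, hv.ae_ne] with x hux hvx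
    exact ⟨by simp [hux.1], ENNReal.add_ne_top.2 ⟨hux.2, hvx.2⟩⟩
  maximal_le := by
    filter_upwards [hu.maximal_le, hv.maximal_le] with x hux hvx
    rw [mul_add]
    exact (maximal_add_le hu.measurable).trans (add_le_add hux hvx)

lemma min (hu : IsA1Weight K u) (hv : IsA1Weight K v) :
    IsA1Weight K fun x => min (u x) (v x) where
  measurable := hu.measurable.min hv.measurable
  ae_ne := by
    filter_upwards [hu.ae_ne, hv.ae_ne] with x hux hvx
    rcases min_choice (u x) (v x) with h | h <;> rwa [h]
  maximal_le := by
    filter_upwards [hu.maximal_le, hv.maximal_le] with x hux hvx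
    rw [mul_min]
    exact le_min ((maximal_mono (fun _ => min_le_left _ _) x).trans hux)
      ((maximal_mono (fun _ => min_le_right _ _) x).trans hvx)

end IsA1Weight

lemma lintegral_Ioc_enorm_rpow_neg {c R : ℝ} (hc : c < 1) (hR : 0 < R) :
    ∫⁻ y in Set.Ioc 0 R, ‖y‖ₑ ^ (-c) = ENNReal.ofReal (R ^ (1 - c) / (1 - c)) := by
  have hint : IntegrableOn (fun y : ℝ => y ^ (-c)) (Set.Ioc 0 R) :=
    (intervalIntegrable_iff_integrableOn_Ioc_of_le hR.le).1
      (intervalIntegral.intervalIntegrable_rpow' (by linarith))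
  have hval : ∫ y in Set.Ioc 0 R, y ^ (-c) = R ^ (1 - c) / (1 - c) := by
    rw [← intervalIntegral.integral_of_le hR.le, integral_rpow (.inl (by linarith)),
      Real.zero_rpow (by linarith), sub_zero, neg_add_eq_sub]
  rw [← hval, ofReal_integral_eq_lintegral_ofReal hint]
  · refine setLIntegral_congr_fun measurableSet_Ioc fun y hy => ?_
    simp only [Real.enorm_of_nonneg hy.1.le, ENNReal.ofReal_rpow_of_pos hy.1]
  · filter_upwards [ae_restrict_mem measurableSet_Ioc] with y hy using Real.rpow_nonneg hy.1.le _

lemma lintegral_Ioo_neg_enorm_rpow_neg_le {c R : ℝ} (hc : c < 1) (hR : 0 < R) :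
    ∫⁻ y in Set.Ioo (-R) R, ‖y‖ₑ ^ (-c) ≤ ENNReal.ofReal (2 * R ^ (1 - c) / (1 - c)) := by
  have hsymm : ∫⁻ y in Set.Icc (-R) 0, ‖y‖ₑ ^ (-c) = ∫⁻ y in Set.Icc 0 R, ‖y‖ₑ ^ (-c) := by
    have h := (Measure.measurePreserving_neg (volume : Measure ℝ)).setLIntegral_comp_preimage_emb
      (MeasurableEquiv.neg ℝ).measurableEmbedding (fun y => ‖y‖ₑ ^ (-c)) (Set.Icc 0 R)
    simpa using h
  have hnonneg : 0 ≤ R ^ (1 - c) / (1 - c) := div_nonneg (Real.rpow_nonneg hR.le _) (by linarith)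
  calc _ ≤ ∫⁻ y in Set.Icc (-R) 0 ∪ Set.Icc 0 R, ‖y‖ₑ ^ (-c) :=
        lintegral_mono_set fun y hy => (le_total y 0).imp (fun h => ⟨hy.1.le, h⟩)
          fun h => ⟨h, hy.2.le⟩
    _ ≤ _ := lintegral_union_le _ _ _
    _ = _ := by
        rw [hsymm, ← setLIntegral_congr Ioc_ae_eq_Icc, lintegral_Ioc_enorm_rpow_neg hc hR,
          ← ENNReal.ofReal_add hnonneg hnonneg]
        congr 1; ring

lemma enorm_rpow_neg_le_two_mul {c x y : ℝ} (hc0 : 0 ≤ c) (hc1 : c ≤ 1) (h : |x| ≤ 2 * |y|) :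
    ‖y‖ₑ ^ (-c) ≤ 2 * ‖x‖ₑ ^ (-c) := by
  have hxy : ‖x‖ₑ ≤ 2 * ‖y‖ₑ := by
    rw [Real.enorm_eq_ofReal_abs, Real.enorm_eq_ofReal_abs, ← ENNReal.ofReal_ofNat,
      ← ENNReal.ofReal_mul zero_le_two]
    exact ENNReal.ofReal_le_ofReal h
  have hpow : ‖x‖ₑ ^ c ≤ 2 * ‖y‖ₑ ^ c := calc
    ‖x‖ₑ ^ c ≤ 2 ^ c * ‖y‖ₑ ^ c := by
      rw [← ENNReal.mul_rpow_of_nonneg _ _ hc0]; gcongr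
    _ ≤ 2 * ‖y‖ₑ ^ c := by
      gcongr
      exact (ENNReal.rpow_le_rpow_of_exponent_le (by norm_num) hc1).trans_eq (ENNReal.rpow_one 2)
  rw [ENNReal.rpow_neg, ENNReal.rpow_neg]
  calc (‖y‖ₑ ^ c)⁻¹ = 2 * (2 * ‖y‖ₑ ^ c)⁻¹ := by
        rw [ENNReal.mul_inv (by simp) (by simp), ← mul_assoc,
          ENNReal.mul_inv_cancel (by simp) (by simp), one_mul]
    _ ≤ 2 * (‖x‖ₑ ^ c)⁻¹ := by gcongr

lemma setLAverage_Ioo_enorm_rpow_neg_le {c a b x : ℝ} (hc0 : 0 ≤ c) (hc1 : c < 1)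
    (hx : x ∈ Set.Ioo a b) :
    ⨍⁻ y in Set.Ioo a b, ‖y‖ₑ ^ (-c) ∂volume ≤ ENNReal.ofReal (6 / (1 - c)) * ‖x‖ₑ ^ (-c) := by
  have hc : 0 < 1 - c := by linarith
  have hL : 0 < b - a := by linarith [hx.1, hx.2]
  have hdist {y : ℝ} (hy : y ∈ Set.Ioo a b) : |x - y| < b - a :=
    abs_sub_lt_iff.2 ⟨by linarith [hx.2, hy.1], by linarith [hx.1, hy.2]⟩
  rw [setLAverage_eq, Real.volume_Ioo]
  refine ENNReal.div_le_of_le_mul ?_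
  rcases le_or_gt (2 * (b - a)) |x| with hfar | hnear
  · have htwo : 2 ≤ ENNReal.ofReal (6 / (1 - c)) := by
      rw [← ENNReal.ofReal_ofNat]
      exact ENNReal.ofReal_le_ofReal ((le_div_iff₀ hc).2 (by linarith))
    rw [← Real.volume_Ioo, ← setLIntegral_const]
    refine setLIntegral_mono measurable_const fun y hy => ?_
    have hy2 : |x| ≤ 2 * |y| := by linarith [hdist hy, abs_sub_abs_le_abs_sub x y]
    exact (enorm_rpow_neg_le_two_mul hc0 hc1.le hy2).trans (by gcongr)
  · have hsub : Set.Ioo a b ⊆ Set.Ioo (-(3 * (b - a))) (3 * (b - a)) := fun y hy => by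
      rw [Set.mem_Ioo, ← abs_lt]
      linarith [hdist hy, abs_sub_abs_le_abs_sub y x, abs_sub_comm x y]
    have hxR : ENNReal.ofReal (3 * (b - a)) ^ (-c) ≤ ‖x‖ₑ ^ (-c) := by
      rw [ENNReal.rpow_neg, ENNReal.rpow_neg, Real.enorm_eq_ofReal_abs]
      gcongr
      linarith
    calc _ ≤ ENNReal.ofReal (2 * (3 * (b - a)) ^ (1 - c) / (1 - c)) :=
          (lintegral_mono_set hsub).trans (lintegral_Ioo_neg_enorm_rpow_neg_le hc1 (by positivity))
      _ = ENNReal.ofReal (6 / (1 - c)) * ENNReal.ofReal (3 * (b - a)) ^ (-c) *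
            ENNReal.ofReal (b - a) := by
          rw [ENNReal.ofReal_rpow_of_pos (by positivity), ← ENNReal.ofReal_mul (by positivity),
            ← ENNReal.ofReal_mul (by positivity), sub_eq_add_neg 1 c,
            Real.rpow_add (by positivity), Real.rpow_one]
          congr 1; ring
      _ ≤ _ := by gcongr

lemma isA1Weight_enorm_rpow_neg {c : ℝ} (hc0 : 0 ≤ c) (hc1 : c < 1) :
    IsA1Weight (ENNReal.ofReal (6 / (1 - c))) fun x => ‖x‖ₑ ^ (-c) where
  measurable := measurable_enorm.pow_const _
  ae_ne := by
    filter_upwards [Measure.ae_ne volume (0 : ℝ)] with x hx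
    simp [hx]
  maximal_le := .of_forall fun _ =>
    maximal_le fun _ hx => setLAverage_Ioo_enorm_rpow_neg_le hc0 hc1 hx

/-! ### Herz norms -/

lemma measurableSet_herzRing (k : ℤ) : MeasurableSet (herzRing k) :=
  measurableSet_Ioo.diff measurableSet_Ioo

lemma mem_herzRing {k : ℤ} {x : ℝ} : x ∈ herzRing k ↔ 2 ^ (k - 1) ≤ |x| ∧ |x| < 2 ^ k := by
  simp only [herzRing, Set.mem_sdiff, Set.mem_Ioo, ← abs_lt, not_lt]
  exact and_comm

lemma ofReal_two_rpow (a : ℝ) : ENNReal.ofReal (2 ^ a) = (2 : ℝ≥0∞) ^ a := by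
  rw [← ENNReal.ofReal_rpow_of_pos two_pos, ENNReal.ofReal_ofNat]

lemma two_rpow_le_enorm_of_mem_herzRing {k : ℤ} {x : ℝ} (hx : x ∈ herzRing k) :
    (2 : ℝ≥0∞) ^ ((k : ℝ) - 1) ≤ ‖x‖ₑ := by
  rw [← ofReal_two_rpow, Real.enorm_eq_ofReal_abs, ← Int.cast_one, ← Int.cast_sub,
    Real.rpow_intCast]
  exact ENNReal.ofReal_le_ofReal (mem_herzRing.1 hx).1

lemma enorm_le_two_rpow_of_mem_herzRing {k : ℤ} {x : ℝ} (hx : x ∈ herzRing k) :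
    ‖x‖ₑ ≤ (2 : ℝ≥0∞) ^ (k : ℝ) := by
  rw [← ofReal_two_rpow, Real.enorm_eq_ofReal_abs, Real.rpow_intCast]
  exact ENNReal.ofReal_le_ofReal (mem_herzRing.1 hx).2.le

lemma ae_mem_iUnion_herzRing : ∀ᵐ x : ℝ, x ∈ ⋃ j, herzRing j := by
  filter_upwards [Measure.ae_ne volume (0 : ℝ)] with x hx
  obtain ⟨n, hle, hlt⟩ := exists_mem_Ico_zpow (abs_pos.2 hx) one_lt_two
  exact Set.mem_iUnion.2 ⟨n + 1, mem_herzRing.2 ⟨by simpa using hle, hlt⟩⟩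

lemma lintegral_le_tsum_herzRing (f : ℝ → ℝ≥0∞) :
    ∫⁻ x, f x ≤ ∑' j, ∫⁻ x in herzRing j, f x := by
  conv_lhs => rw [← Measure.restrict_eq_self_of_ae_mem ae_mem_iUnion_herzRing]
  exact lintegral_iUnion_le _ _

section herzNorm

lemma lqNormOn_mono (q : ℝ≥0∞) (s : Set ℝ) {f g : ℝ → ℝ≥0∞} (h : ∀ x, f x ≤ g x) :
    lqNormOn q s f ≤ lqNormOn q s g := by
  unfold lqNormOn
  split_ifs
  · exact essSup_mono_ae (.of_forall fun x => Set.indicator_le_indicator (h x))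
  · gcongr with x
    exact h x

lemma lpZNorm_mono (p : ℝ≥0∞) {a b : ℤ → ℝ≥0∞} (h : ∀ k, a k ≤ b k) :
    lpZNorm p a ≤ lpZNorm p b := by
  unfold lpZNorm
  split_ifs
  · exact iSup_mono h
  · gcongr with k
    exact h k

lemma herzNorm1_mono (α : ℝ) (p q : ℝ≥0∞) {f g : ℝ → ℝ≥0∞} (h : ∀ x, f x ≤ g x) :
    herzNorm1 α p q f ≤ herzNorm1 α p q g :=
  lpZNorm_mono p fun _ => mul_le_mul_right (lqNormOn_mono q _ h) _

lemma mixedHerzNormE_mono {n : ℕ} (α : Fin n → ℝ) (p q : Fin n → ℝ≥0∞)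
    {f g : (Fin n → ℝ) → ℝ≥0∞} (h : ∀ x, f x ≤ g x) :
    mixedHerzNormE n α p q f ≤ mixedHerzNormE n α p q g := by
  induction n with
  | zero => exact h _
  | succ n ih => exact herzNorm1_mono _ _ _ fun t => ih _ _ _ fun y => h _

variable {c : ℝ≥0∞}

lemma lqNormOn_const_mul {q : ℝ≥0∞} (hq : q ≠ 0) (hc : c ≠ ∞) (s : Set ℝ) (f : ℝ → ℝ≥0∞) :
    lqNormOn q s (fun x => c * f x) = c * lqNormOn q s f := by
  unfold lqNormOn
  split_ifs with hq'
  · rw [← ENNReal.essSup_const_mul]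
    exact congrArg (essSup · volume) (funext fun x => Set.indicator_const_mul s f c x)
  · have hqr : 0 < q.toReal := ENNReal.toReal_pos hq hq'
    simp only [ENNReal.mul_rpow_of_nonneg _ _ hqr.le, one_div]
    rw [lintegral_const_mul' _ _ (ENNReal.rpow_ne_top_of_nonneg hqr.le hc),
      ENNReal.mul_rpow_of_nonneg _ _ (inv_nonneg.2 hqr.le), ENNReal.rpow_rpow_inv hqr.ne']

lemma lpZNorm_const_mul {p : ℝ≥0∞} (hp : p ≠ 0) (a : ℤ → ℝ≥0∞) :
    lpZNorm p (fun k => c * a k) = c * lpZNorm p a := by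
  unfold lpZNorm
  split_ifs with hp'
  · rw [ENNReal.mul_iSup]
  · have hpr : 0 < p.toReal := ENNReal.toReal_pos hp hp'
    simp only [ENNReal.mul_rpow_of_nonneg _ _ hpr.le, ENNReal.tsum_mul_left, one_div]
    rw [ENNReal.mul_rpow_of_nonneg _ _ (inv_nonneg.2 hpr.le), ENNReal.rpow_rpow_inv hpr.ne']

lemma herzNorm1_const_mul (α : ℝ) {p q : ℝ≥0∞} (hp : p ≠ 0) (hq : q ≠ 0) (hc : c ≠ ∞)
    (f : ℝ → ℝ≥0∞) : herzNorm1 α p q (fun x => c * f x) = c * herzNorm1 α p q f := by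
  simp only [herzNorm1, lqNormOn_const_mul hq hc, mul_left_comm _ c, lpZNorm_const_mul hp]

lemma mixedHerzNormE_const_mul {n : ℕ} (α : Fin n → ℝ) {p q : Fin n → ℝ≥0∞} (hp : ∀ i, p i ≠ 0)
    (hq : ∀ i, q i ≠ 0) (hc : c ≠ ∞) (f : (Fin n → ℝ) → ℝ≥0∞) :
    mixedHerzNormE n α p q (fun x => c * f x) = c * mixedHerzNormE n α p q f := by
  induction n with
  | zero => rfl
  | succ n ih =>
    rw [mixedHerzNormE, mixedHerzNormE, ← herzNorm1_const_mul _ (hp _) (hq _) hc]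
    congr! 2 with t
    exact ih _ (fun i => hp i.castSucc) (fun i => hq i.castSucc) _

lemma herzNorm1_eq (α : ℝ) {p q : ℝ≥0∞} (hp : p ≠ ∞) (hq : q ≠ ∞) (g : ℝ → ℝ≥0∞) :
    herzNorm1 α p q g = (∑' k : ℤ, (2 ^ ((k : ℝ) * α) *
      (∫⁻ x in herzRing k, g x ^ q.toReal) ^ q.toReal⁻¹) ^ p.toReal) ^ p.toReal⁻¹ := by
  simp only [herzNorm1, lpZNorm, lqNormOn, hp, hq, if_false, one_div, ofReal_two_rpow]

lemma herzNorm1_eq_tsum_rpow_div (α : ℝ) {p q : ℝ≥0∞} (hp : p ≠ ∞) (hq0 : q ≠ 0) (hq : q ≠ ∞)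
    (g : ℝ → ℝ≥0∞) :
    herzNorm1 α p q g = (∑' k : ℤ, (2 ^ ((k : ℝ) * (α * q.toReal)) *
      ∫⁻ x in herzRing k, g x ^ q.toReal) ^ (p.toReal / q.toReal)) ^ p.toReal⁻¹ := by
  have hqr : q.toReal ≠ 0 := (ENNReal.toReal_pos hq0 hq).ne'
  simp only [herzNorm1_eq α hp hq, ENNReal.mul_rpow_of_nonneg _ _ ENNReal.toReal_nonneg,
    ENNReal.mul_rpow_of_nonneg _ _ (div_nonneg (ENNReal.toReal_nonneg (a := p))
      (ENNReal.toReal_nonneg (a := q))), ← ENNReal.rpow_mul]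
  congr! 5
  · field_simp
  · ring

end herzNorm

lemma measurable_snoc (n : ℕ) :
    Measurable (Function.uncurry fun (y : Fin n → ℝ) t => (Fin.snoc y t : Fin (n + 1) → ℝ)) := by
  refine measurable_pi_iff.2 fun i => ?_
  induction i using Fin.lastCases with
  | last => simpa only [Function.uncurry_def, Fin.snoc_last] using measurable_snd
  | cast j =>
    simp only [Function.uncurry_def, Fin.snoc_castSucc]
    exact (measurable_pi_apply j).comp measurable_fst

lemma one_lt_toReal {p : ℝ≥0∞} (hp : p ∈ Set.Ioo 1 ∞) : 1 < p.toReal :=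
  (ENNReal.lt_ofReal_iff_toReal_lt ENNReal.one_ne_top).1 (by simpa [hp.2.ne] using hp.1)

lemma hasMaximalBound_mixedHerzNormE {n : ℕ} (α : Fin n → ℝ) {p q : Fin n → ℝ≥0∞}
    (hp : ∀ i, p i ∈ Set.Ioo 1 ∞) (hq : ∀ i, q i ∈ Set.Ioo 1 ∞) :
    HasMaximalBound fun _ : Unit => mixedHerzNormE n α p q := by
  induction n with
  | zero => exact hasMaximalBound_eval _
  | succ n ih =>
    have h := (((ih (Fin.init α) (fun i => hp i.castSucc) fun i => hq i.castSucc).lintegral_rpow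
      (measurable_snoc n) (fun k => volume.restrict (herzRing k))
      (one_lt_toReal (hq (Fin.last n)))).tsum_rpow
      (fun k => 2 ^ ((k : ℝ) * α (Fin.last n))) (one_lt_toReal (hp (Fin.last n))))
    convert h using 3 with _ F
    exact herzNorm1_eq _ (hp _).2.ne (hq _).2.ne _

/-! ### Off-diagonal decay between dyadic rings -/

lemma tsum_convolution_rpow_le {G : Type*} [AddCommGroup G] (θ η a : G → ℝ≥0∞) {s : ℝ}
    (hs : 0 < s) :
    ∑' k, (∑' j, θ (k - j) * (η (k - j) * a j)) ^ s ≤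
      (∑' m, θ m) ^ s * ((∑' m, η m ^ s) * ∑' j, a j ^ s) := by
  calc ∑' k, (∑' j, θ (k - j) * (η (k - j) * a j)) ^ s
      ≤ ∑' k, (∑' j, θ (k - j)) ^ s * ∑' j, (η (k - j) * a j) ^ s :=
        ENNReal.tsum_le_tsum fun k => tsum_mul_rpow_le _ _ hs
    _ = ∑' k, (∑' m, θ m) ^ s * ∑' j, η (k - j) ^ s * a j ^ s :=
        tsum_congr fun k => by
          simp only [← (Equiv.subLeft k).tsum_eq θ, Equiv.subLeft_apply,
            ENNReal.mul_rpow_of_nonneg _ _ hs.le]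
    _ = (∑' m, θ m) ^ s * ∑' j, ∑' k, η (k - j) ^ s * a j ^ s := by
        rw [ENNReal.tsum_mul_left, ENNReal.tsum_comm]
    _ = (∑' m, θ m) ^ s * ((∑' m, η m ^ s) * ∑' j, a j ^ s) := by
        simp only [ENNReal.tsum_mul_right, ← ENNReal.tsum_mul_left,
          fun j => (Equiv.subRight j).tsum_eq fun m => η m ^ s, ← Equiv.subRight_apply]

lemma tsum_two_rpow_neg_abs_mul_le (s : ℝ) :
    ∑' m : ℤ, (2 : ℝ≥0∞) ^ (-|(m : ℝ)| * s) ≤ 2 * geomSum s := by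
  rw [tsum_of_nat_of_neg_add_one ENNReal.summable ENNReal.summable, two_mul]
  refine add_le_add (by simp [geomSum]) ?_
  calc ∑' i : ℕ, (2 : ℝ≥0∞) ^ (-|((-(i + 1 : ℤ) : ℤ) : ℝ)| * s)
      = ∑' i : ℕ, (fun i : ℕ => (2 : ℝ≥0∞) ^ (-(i : ℝ) * s)) (i + 1) :=
        tsum_congr fun i => by
          push_cast
          rw [abs_neg, abs_of_nonneg (by positivity)]
    _ ≤ geomSum s := ENNReal.tsum_comp_le_tsum_of_injective (add_left_injective 1) _

lemma tsum_rpow_le_of_decay {ε s : ℝ} (hε : 0 < ε) (hs : 0 < s) {E : ℝ≥0∞} (hE : E ≠ ∞) :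
    ∃ D : ℝ≥0∞, D ≠ ∞ ∧ ∀ a b : ℤ → ℝ≥0∞,
      (∀ k, b k ≤ E * ∑' j : ℤ, 2 ^ (-|(k : ℝ) - j| * ε) * a j) →
        ∑' k, b k ^ s ≤ D * ∑' j, a j ^ s := by
  have hsum {t : ℝ} (ht : 0 < t) : ∑' m : ℤ, (2 : ℝ≥0∞) ^ (-|(m : ℝ)| * t) ≠ ∞ :=
    ne_top_of_le_ne_top (ENNReal.mul_ne_top (by simp) (geomSum_ne_top ht))
      (tsum_two_rpow_neg_abs_mul_le t)
  let θ (m : ℤ) : ℝ≥0∞ := 2 ^ (-|(m : ℝ)| * (ε / 2))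
  have hθs : ∑' m, θ m ^ s ≠ ∞ := by
    simp only [θ, ← ENNReal.rpow_mul, mul_assoc]
    exact hsum (by positivity)
  have hθθ (k j : ℤ) : (2 : ℝ≥0∞) ^ (-|(k : ℝ) - j| * ε) = θ (k - j) * θ (k - j) := by
    simp only [θ, ← two_rpow_add, Int.cast_sub]
    ring_nf
  refine ⟨E ^ s * ((∑' m, θ m) ^ s * ∑' m, θ m ^ s), ENNReal.mul_ne_top
    (ENNReal.rpow_ne_top_of_nonneg hs.le hE) (ENNReal.mul_ne_top
      (ENNReal.rpow_ne_top_of_nonneg hs.le (hsum (by positivity))) hθs), fun a b hab => ?_⟩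
  calc ∑' k, b k ^ s ≤ ∑' k, E ^ s * (∑' j, θ (k - j) * (θ (k - j) * a j)) ^ s := by
        refine ENNReal.tsum_le_tsum fun k => ?_
        rw [← ENNReal.mul_rpow_of_nonneg _ _ hs.le]
        simp only [← mul_assoc, ← hθθ]
        exact ENNReal.rpow_le_rpow (hab k) hs.le
    _ ≤ E ^ s * ((∑' m, θ m) ^ s * ((∑' m, θ m ^ s) * ∑' j, a j ^ s)) := by
        rw [ENNReal.tsum_mul_left]
        gcongr
        exact tsum_convolution_rpow_le θ θ a hs
    _ = _ := by ring

/-- The weight `(1 + |2⁻ᵏ x|^(-c))^(1-q) * min 1 |2⁻ᵏ x|^(-c)`, which is comparable to `1` on the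
ring `herzRing k` and decays off that ring at the rates that the class `A_q` allows. -/
def testWeight (q c : ℝ) (k : ℤ) (x : ℝ) : ℝ≥0∞ :=
  (1 + 2 ^ ((k : ℝ) * c) * ‖x‖ₑ ^ (-c)) ^ (1 - q) * min 1 (2 ^ ((k : ℝ) * c) * ‖x‖ₑ ^ (-c))

section testWeight

variable {q c : ℝ} {k j : ℤ} {x : ℝ}

lemma isMuckenhoupt_testWeight (hq : 1 < q) (hc0 : 0 ≤ c) (hc1 : c < 1) (k : ℤ) :
    IsMuckenhoupt q (ENNReal.ofReal (6 / (1 - c)) ^ q) (testWeight q c k) := by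
  have hone : IsA1Weight (ENNReal.ofReal (6 / (1 - c))) fun _ => 1 :=
    .one (ENNReal.one_le_ofReal.2 ((le_div_iff₀ (by linarith)).2 (by linarith)))
  have hpow := (isA1Weight_enorm_rpow_neg hc0 hc1).const_mul
    (two_rpow_ne_zero ((k : ℝ) * c)) (two_rpow_ne_top _)
  exact isMuckenhoupt_mul_of_isA1Weight hq ENNReal.ofReal_ne_top (hone.add hpow) (hone.min hpow)

lemma two_rpow_le_mul_enorm_rpow_neg (hc : 0 ≤ c) (hx : x ∈ herzRing j) :
    (2 : ℝ≥0∞) ^ (((k : ℝ) - j) * c) ≤ 2 ^ ((k : ℝ) * c) * ‖x‖ₑ ^ (-c) := by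
  have h := ENNReal.rpow_le_rpow (enorm_le_two_rpow_of_mem_herzRing hx) hc
  rw [sub_mul, sub_eq_add_neg, two_rpow_add, ENNReal.rpow_neg, ENNReal.rpow_neg, ENNReal.rpow_mul]
  rw [← ENNReal.rpow_mul] at h ⊢
  gcongr

lemma mul_enorm_rpow_neg_le (hc0 : 0 ≤ c) (hc1 : c ≤ 1) (hx : x ∈ herzRing j) :
    2 ^ ((k : ℝ) * c) * ‖x‖ₑ ^ (-c) ≤ 2 * (2 : ℝ≥0∞) ^ (((k : ℝ) - j) * c) := by
  have h := ENNReal.rpow_le_rpow (two_rpow_le_enorm_of_mem_herzRing hx) hc0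
  rw [← ENNReal.rpow_mul] at h
  calc 2 ^ ((k : ℝ) * c) * ‖x‖ₑ ^ (-c) ≤ 2 ^ ((k : ℝ) * c) * (2 ^ (((j : ℝ) - 1) * c))⁻¹ := by
        rw [ENNReal.rpow_neg]; gcongr
    _ = 2 ^ (c + ((k : ℝ) - j) * c) := by
        rw [← ENNReal.rpow_neg, ← two_rpow_add]; ring_nf
    _ ≤ 2 ^ (1 + ((k : ℝ) - j) * c) := two_rpow_le_two_rpow (by linarith)
    _ = 2 * 2 ^ (((k : ℝ) - j) * c) := by rw [two_rpow_add, ENNReal.rpow_one]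

lemma three_rpow_le_testWeight (hq : 1 ≤ q) (hc0 : 0 ≤ c) (hc1 : c ≤ 1) (hx : x ∈ herzRing k) :
    (3 : ℝ≥0∞) ^ (1 - q) ≤ testWeight q c k x := by
  have hlo := two_rpow_le_mul_enorm_rpow_neg (k := k) hc0 hx
  have hhi := mul_enorm_rpow_neg_le (k := k) hc0 hc1 hx
  rw [sub_self, zero_mul, ENNReal.rpow_zero] at hlo hhi
  rw [testWeight, min_eq_left hlo, mul_one, ← neg_sub, ENNReal.rpow_neg, ENNReal.rpow_neg]
  refine ENNReal.inv_le_inv.2 (ENNReal.rpow_le_rpow ?_ (by linarith))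
  exact (add_le_add_right hhi 1).trans_eq (by norm_num)

lemma testWeight_le_of_le (hq : 1 ≤ q) (hc : 0 ≤ c) (hx : x ∈ herzRing j) :
    testWeight q c k x ≤ 2 ^ (((k : ℝ) - j) * c * (1 - q)) := by
  have hu := two_rpow_le_mul_enorm_rpow_neg (k := k) hc hx
  rw [testWeight]
  generalize 2 ^ ((k : ℝ) * c) * ‖x‖ₑ ^ (-c) = u at hu ⊢
  refine (mul_le_of_le_one_right' (min_le_left _ _)).trans ?_
  rw [ENNReal.rpow_mul, ← neg_sub q 1, ENNReal.rpow_neg, ENNReal.rpow_neg]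
  exact ENNReal.inv_le_inv.2 (ENNReal.rpow_le_rpow (hu.trans le_add_self) (sub_nonneg.2 hq))

lemma testWeight_le_of_ge (hq : 1 ≤ q) (hc0 : 0 ≤ c) (hc1 : c ≤ 1) (hx : x ∈ herzRing j) :
    testWeight q c k x ≤ 2 * 2 ^ (((k : ℝ) - j) * c) := by
  refine (mul_le_of_le_one_left' ?_).trans
    ((min_le_right _ _).trans (mul_enorm_rpow_neg_le hc0 hc1 hx))
  rw [← neg_sub q 1, ENNReal.rpow_neg, ENNReal.inv_le_one]
  simpa using ENNReal.rpow_le_rpow (le_self_add (a := (1 : ℝ≥0∞))) (sub_nonneg.2 hq)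

lemma testWeight_le {β ε : ℝ} (hq : 1 ≤ q) (hc0 : 0 ≤ c) (hc1 : c ≤ 1)
    (hεl : ε ≤ c * (q - 1) - β) (hεr : ε ≤ c + β) (hx : x ∈ herzRing j) :
    testWeight q c k x ≤ 2 * (2 ^ (-|(k : ℝ) - j| * ε) * 2 ^ (((j : ℝ) - k) * β)) := by
  rw [← two_rpow_add]
  rcases le_total 0 ((k : ℝ) - j) with hjk | hkj
  · refine (testWeight_le_of_le hq hc0 hx).trans
      ((two_rpow_le_two_rpow ?_).trans (le_mul_of_one_le_left' one_le_two))
    rw [abs_of_nonneg hjk]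
    linarith [mul_le_mul_of_nonneg_left hεl hjk]
  · refine (testWeight_le_of_ge hq hc0 hc1 hx).trans ?_
    gcongr
    · exact one_le_two
    rw [abs_of_nonpos hkj]
    linarith [mul_le_mul_of_nonpos_left hεr hkj]

lemma three_rpow_mul_setLIntegral_herzRing_le (hq : 1 ≤ q) (hc0 : 0 ≤ c) (hc1 : c ≤ 1)
    (g : ℝ → ℝ≥0∞) :
    3 ^ (1 - q) * ∫⁻ x in herzRing k, g x ≤ ∫⁻ x, g x * testWeight q c k x := by
  rw [← lintegral_const_mul' _ _ (ENNReal.rpow_ne_top_of_ne_zero (by simp) (by simp))]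
  refine (setLIntegral_mono' (measurableSet_herzRing k) fun x hx => ?_).trans
    (setLIntegral_le_lintegral _ _)
  rw [mul_comm]
  exact mul_le_mul_right (three_rpow_le_testWeight hq hc0 hc1 hx) _

lemma lintegral_mul_testWeight_le {β ε : ℝ} (hq : 1 ≤ q) (hc0 : 0 ≤ c) (hc1 : c ≤ 1)
    (hεl : ε ≤ c * (q - 1) - β) (hεr : ε ≤ c + β) (g : ℝ → ℝ≥0∞) :
    ∫⁻ x, g x * testWeight q c k x ≤
      2 * ∑' j : ℤ, 2 ^ (-|(k : ℝ) - j| * ε) *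
        (2 ^ (((j : ℝ) - k) * β) * ∫⁻ x in herzRing j, g x) := by
  rw [← ENNReal.tsum_mul_left]
  refine (lintegral_le_tsum_herzRing _).trans (ENNReal.tsum_le_tsum fun j => ?_)
  rw [← mul_assoc, ← mul_assoc, mul_assoc 2, ← lintegral_const_mul' _ _
    (ENNReal.mul_ne_top (by simp) (ENNReal.mul_ne_top (two_rpow_ne_top _) (two_rpow_ne_top _)))]
  refine setLIntegral_mono' (measurableSet_herzRing j) fun x hx => ?_
  rw [mul_comm]
  exact mul_le_mul_left (testWeight_le hq hc0 hc1 hεl hεr hx) _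

end testWeight

lemma WeightedBound.exists_herzRing_decay {𝓕 : Set ((ℝ → ℝ≥0∞) × (ℝ → ℝ≥0∞))} {q β : ℝ}
    (h : WeightedBound 𝓕 q) (hq : 1 < q) (hβ : β ∈ Set.Ioo (-1) (q - 1)) :
    ∃ ε > 0, ∃ E : ℝ≥0∞, E ≠ ∞ ∧ ∀ P ∈ 𝓕, ∀ k : ℤ,
      2 ^ ((k : ℝ) * β) * ∫⁻ x in herzRing k, P.2 x ^ q ≤
        E * ∑' j : ℤ, 2 ^ (-|(k : ℝ) - j| * ε) *
          (2 ^ ((j : ℝ) * β) * ∫⁻ x in herzRing j, P.1 x ^ q) := by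
  have hq' : 0 < q - 1 := by linarith
  obtain ⟨c, hc, hc1⟩ : ∃ c, max 0 (max (β / (q - 1)) (-β)) < c ∧ c < 1 :=
    exists_between (max_lt one_pos (max_lt ((div_lt_one hq').2 hβ.2) (by linarith [hβ.1])))
  obtain ⟨hc0, hβc, hcβ⟩ : 0 < c ∧ β / (q - 1) < c ∧ -β < c := by simpa using hc
  rw [div_lt_iff₀ hq'] at hβc
  obtain ⟨N, hN, hbound⟩ := h (ENNReal.ofReal (6 / (1 - c)) ^ q)
    (ENNReal.rpow_ne_top_of_nonneg (by linarith) ENNReal.ofReal_ne_top)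
  refine ⟨min (c * (q - 1) - β) (c + β), lt_min (by linarith) (by linarith),
    3 ^ (q - 1) * (N * 2), ENNReal.mul_ne_top (ENNReal.rpow_ne_top_of_nonneg hq'.le (by simp))
      (ENNReal.mul_ne_top hN (by simp)), fun P hP k => ?_⟩
  set ε := min (c * (q - 1) - β) (c + β)
  set B := ∫⁻ x in herzRing k, P.2 x ^ q
  let A (j : ℤ) := ∫⁻ x in herzRing j, P.1 x ^ q
  have htest : 3 ^ (1 - q) * B ≤ N * (2 * ∑' j : ℤ,
      2 ^ (-|(k : ℝ) - j| * ε) * (2 ^ (((j : ℝ) - k) * β) * A j)) :=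
    (three_rpow_mul_setLIntegral_herzRing_le hq.le hc0.le hc1.le _).trans
      ((hbound _ (isMuckenhoupt_testWeight hq hc0.le hc1 k) P hP).trans (mul_le_mul_right
        (lintegral_mul_testWeight_le hq.le hc0.le hc1.le (min_le_left _ _) (min_le_right _ _) _) N))
  have hthree : (3 : ℝ≥0∞) ^ (q - 1) * 3 ^ (1 - q) = 1 := by
    rw [← ENNReal.rpow_add _ _ (by simp) (by simp)]; simp
  have hshift (j : ℤ) : (2 : ℝ≥0∞) ^ ((j : ℝ) * β) =
      2 ^ ((k : ℝ) * β) * 2 ^ (((j : ℝ) - k) * β) := by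
    rw [← two_rpow_add]; ring_nf
  calc 2 ^ ((k : ℝ) * β) * B
      = 2 ^ ((k : ℝ) * β) * (3 ^ (q - 1) * (3 ^ (1 - q) * B)) := by
        rw [← mul_assoc (3 ^ _), hthree, one_mul]
    _ ≤ 2 ^ ((k : ℝ) * β) * (3 ^ (q - 1) * (N * (2 * ∑' j : ℤ,
          2 ^ (-|(k : ℝ) - j| * ε) * (2 ^ (((j : ℝ) - k) * β) * A j)))) := by gcongr
    _ = 3 ^ (q - 1) * (N * 2) * (2 ^ ((k : ℝ) * β) * ∑' j : ℤ,
          2 ^ (-|(k : ℝ) - j| * ε) * (2 ^ (((j : ℝ) - k) * β) * A j)) := by ring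
    _ = 3 ^ (q - 1) * (N * 2) * ∑' j : ℤ,
          2 ^ (-|(k : ℝ) - j| * ε) * (2 ^ ((j : ℝ) * β) * A j) := by
        rw [← ENNReal.tsum_mul_left]
        exact congrArg _ (tsum_congr fun j => by rw [hshift j]; ring)

lemma WeightedBound.exists_herzNorm1_le {𝓕 : Set ((ℝ → ℝ≥0∞) × (ℝ → ℝ≥0∞))} {α : ℝ}
    {p q : ℝ≥0∞} (h : WeightedBound 𝓕 q.toReal) (hp0 : p ≠ 0) (hp : p ≠ ∞)
    (hq : q ∈ Set.Ioo 1 ∞) (hα : α ∈ Set.Ioo (-q.toReal⁻¹) (1 - q.toReal⁻¹)) :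
    ∃ C : ℝ≥0∞, C ≠ ∞ ∧ ∀ P ∈ 𝓕, herzNorm1 α p q P.2 ≤ C * herzNorm1 α p q P.1 := by
  have hq1 := one_lt_toReal hq
  have hq0 : 0 < q.toReal := by linarith
  have hp0' : 0 < p.toReal := ENNReal.toReal_pos hp0 hp
  have hβ : α * q.toReal ∈ Set.Ioo (-1) (q.toReal - 1) := by
    have hlo := mul_lt_mul_of_pos_right hα.1 hq0
    have hhi := mul_lt_mul_of_pos_right hα.2 hq0
    rw [neg_mul, inv_mul_cancel₀ hq0.ne'] at hlo
    rw [sub_mul, one_mul, inv_mul_cancel₀ hq0.ne'] at hhi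
    exact ⟨hlo, hhi⟩
  obtain ⟨ε, hε, E, hE, hdecay⟩ := h.exists_herzRing_decay hq1 hβ
  obtain ⟨D, hD, hsum⟩ := tsum_rpow_le_of_decay hε (div_pos hp0' hq0) hE
  refine ⟨D ^ p.toReal⁻¹, ENNReal.rpow_ne_top_of_nonneg (by positivity) hD, fun P hP => ?_⟩
  simp only [herzNorm1_eq_tsum_rpow_div α hp (zero_lt_one.trans hq.1).ne' hq.2.ne]
  rw [← ENNReal.mul_rpow_of_nonneg _ _ (by positivity)]
  exact ENNReal.rpow_le_rpow (hsum _ _ (hdecay P hP)) (by positivity)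

/-! ### The strong maximal function -/

section strongMaximal

variable {n : ℕ}

/-- The strong maximal function, as an iteration of one-dimensional maximal operators: the one in
the last variable is applied first. -/
def strongMaximal : (n : ℕ) → ((Fin n → ℝ) → ℝ≥0∞) → (Fin n → ℝ) → ℝ≥0∞
  | 0, f => f
  | n + 1, f => fun x => strongMaximal n
      (fun y => maximal volume (fun t => f (Fin.snoc y t)) (x (Fin.last n))) (Fin.init x)

lemma measurable_uncurry_snoc {f : (Fin (n + 1) → ℝ) → ℝ≥0∞} (hf : Measurable f) :
    Measurable (Function.uncurry fun (t : ℝ) (y : Fin n → ℝ) => f (Fin.snoc y t)) :=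
  hf.comp ((measurable_snoc n).comp measurable_swap)

lemma measurable_maximal_snoc {f : (Fin (n + 1) → ℝ) → ℝ≥0∞} (hf : Measurable f) (t : ℝ) :
    Measurable fun y : Fin n → ℝ => maximal volume (fun s => f (Fin.snoc y s)) t :=
  (measurable_maximal_uncurry (F := fun s (y : Fin n → ℝ) => f (Fin.snoc y s))
    (measurable_uncurry_snoc hf)).comp (measurable_prodMk_left (x := t))

theorem exists_mixedHerzNormE_strongMaximal_le (α : Fin n → ℝ) {p q : Fin n → ℝ≥0∞}
    (hp : ∀ i, p i ∈ Set.Ioo 1 ∞) (hq : ∀ i, q i ∈ Set.Ioo 1 ∞)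
    (hα : ∀ i, α i ∈ Set.Ioo (-(q i).toReal⁻¹) (1 - (q i).toReal⁻¹)) :
    ∃ C : ℝ≥0∞, C ≠ ∞ ∧ ∀ f : (Fin n → ℝ) → ℝ≥0∞, Measurable f →
      mixedHerzNormE n α p q (strongMaximal n f) ≤ C * mixedHerzNormE n α p q f := by
  induction n with
  | zero => exact ⟨1, ENNReal.one_ne_top, fun f _ => (one_mul _).ge⟩
  | succ n ih =>
    let N : ((Fin n → ℝ) → ℝ≥0∞) → ℝ≥0∞ := mixedHerzNormE n (Fin.init α) (Fin.init p) (Fin.init q)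
    have hp' (i) : Fin.init p i ∈ Set.Ioo 1 ∞ := hp (Fin.castSucc i)
    have hq' (i) : Fin.init q i ∈ Set.Ioo 1 ∞ := hq (Fin.castSucc i)
    have hpl := hp (Fin.last n)
    have hql := hq (Fin.last n)
    obtain ⟨C, hC, hinner⟩ := ih (Fin.init α) hp' hq' fun i => hα i.castSucc
    obtain ⟨D, hD, hlast⟩ :=
      ((hasMaximalBound_mixedHerzNormE (Fin.init α) hp' hq').weightedBound _
        (one_lt_toReal hql)).exists_herzNorm1_le (zero_lt_one.trans hpl.1).ne' hpl.2.ne hql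
        (hα (Fin.last n))
    refine ⟨C * D, ENNReal.mul_ne_top hC hD, fun f hf => ?_⟩
    have hslice (t : ℝ) : N (fun y => strongMaximal (n + 1) f (Fin.snoc y t)) ≤
        C * N fun y => maximal volume (fun s => f (Fin.snoc y s)) t := by
      simpa only [strongMaximal, Fin.snoc_last, Fin.init_snoc]
        using hinner _ (measurable_maximal_snoc hf t)
    calc herzNorm1 (α (Fin.last n)) (p (Fin.last n)) (q (Fin.last n))
          (fun t => N fun y => strongMaximal (n + 1) f (Fin.snoc y t))
        ≤ herzNorm1 (α (Fin.last n)) (p (Fin.last n)) (q (Fin.last n))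
            fun t => C * N fun y => maximal volume (fun s => f (Fin.snoc y s)) t :=
          herzNorm1_mono _ _ _ hslice
      _ = C * herzNorm1 (α (Fin.last n)) (p (Fin.last n)) (q (Fin.last n))
            fun t => N fun y => maximal volume (fun s => f (Fin.snoc y s)) t :=
          herzNorm1_const_mul _ (zero_lt_one.trans hpl.1).ne' (zero_lt_one.trans hql.1).ne' hC _
      _ ≤ C * (D * herzNorm1 (α (Fin.last n)) (p (Fin.last n)) (q (Fin.last n))
            fun t => N fun y => f (Fin.snoc y t)) :=
          mul_le_mul_right (hlast _ ⟨(), _, measurable_uncurry_snoc hf, rfl⟩) C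
      _ = _ := (mul_assoc _ _ _).symm

lemma setLIntegral_ball_le_mul_maximal (f : ℝ → ℝ≥0∞) (x : ℝ) {r : ℝ} (hr : 0 < r) :
    ∫⁻ y in Metric.ball x r, f y ≤ ENNReal.ofReal (4 * r) * maximal volume f x := by
  obtain ⟨a, ha, ha'⟩ := exists_rat_btwn (show x - 2 * r < x - r by linarith)
  obtain ⟨b, hb', hb⟩ := exists_rat_btwn (show x + r < x + 2 * r by linarith)
  have hx : x ∈ ratIoo (a, b) := ⟨by linarith, by linarith⟩
  have hvol : volume (ratIoo (a, b)) ≤ ENNReal.ofReal (4 * r) := by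
    rw [ratIoo, Real.volume_Ioo]
    exact ENNReal.ofReal_le_ofReal (by linarith)
  calc ∫⁻ y in Metric.ball x r, f y ≤ ∫⁻ y in ratIoo (a, b), f y := by
        rw [Real.ball_eq_Ioo]
        exact lintegral_mono_set (Set.Ioo_subset_Ioo ha'.le hb'.le)
    _ = volume (ratIoo (a, b)) * ⨍⁻ y in ratIoo (a, b), f y ∂volume :=
        (measure_mul_setLAverage _ (volume_ratIoo_ne_top _)).symm
    _ ≤ _ := mul_le_mul' hvol (laverage_ratIoo_le_maximal hx)

lemma lintegral_eq_lintegral_lintegral_snoc {f : (Fin (n + 1) → ℝ) → ℝ≥0∞} (hf : Measurable f) :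
    ∫⁻ x, f x = ∫⁻ y : Fin n → ℝ, ∫⁻ t : ℝ, f (Fin.snoc y t) := by
  have h := (volume_preserving_piFinSuccAbove (fun _ : Fin (n + 1) => ℝ) (Fin.last n)).symm
  rw [← h.lintegral_comp hf, Measure.volume_eq_prod, lintegral_prod_symm]
  · simp [MeasurableEquiv.piFinSuccAbove, Fin.insertNthEquiv, Fin.insertNth_last']
  · exact (hf.comp (MeasurableEquiv.measurable _)).aemeasurable

lemma snoc_mem_ball {x : Fin (n + 1) → ℝ} {y : Fin n → ℝ} {t r : ℝ} (hr : 0 < r) :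
    (Fin.snoc y t : Fin (n + 1) → ℝ) ∈ Metric.ball x r ↔
      y ∈ Metric.ball (Fin.init x) r ∧ t ∈ Metric.ball (x (Fin.last n)) r := by
  simp [dist_pi_lt_iff hr, Fin.forall_fin_succ', Fin.init]

lemma indicator_ball_snoc (f : (Fin (n + 1) → ℝ) → ℝ≥0∞) (x : Fin (n + 1) → ℝ) (y : Fin n → ℝ)
    (t : ℝ) {r : ℝ} (hr : 0 < r) :
    (Metric.ball x r).indicator f (Fin.snoc y t) = (Metric.ball (Fin.init x) r).indicator
      (fun y => (Metric.ball (x (Fin.last n)) r).indicator (fun t => f (Fin.snoc y t)) t) y := by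
  classical
  simp only [Set.indicator_apply, snoc_mem_ball hr, ite_and]

lemma setLIntegral_ball_snoc {f : (Fin (n + 1) → ℝ) → ℝ≥0∞} (hf : Measurable f)
    (x : Fin (n + 1) → ℝ) {r : ℝ} (hr : 0 < r) :
    ∫⁻ y in Metric.ball x r, f y = ∫⁻ y in Metric.ball (Fin.init x) r,
      ∫⁻ t in Metric.ball (x (Fin.last n)) r, f (Fin.snoc y t) := by
  rw [← lintegral_indicator measurableSet_ball, ← lintegral_indicator measurableSet_ball,
    lintegral_eq_lintegral_lintegral_snoc (hf.indicator measurableSet_ball)]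
  refine lintegral_congr fun y => ?_
  simp only [indicator_ball_snoc f x y _ hr]
  by_cases hy : y ∈ Metric.ball (Fin.init x) r
  · simp only [Set.indicator_of_mem hy, lintegral_indicator measurableSet_ball]
  · simp only [Set.indicator_of_notMem hy, lintegral_zero]

lemma setLIntegral_ball_le_mul_strongMaximal {f : (Fin n → ℝ) → ℝ≥0∞} (hf : Measurable f)
    (x : Fin n → ℝ) {r : ℝ} (hr : 0 < r) :
    ∫⁻ y in Metric.ball x r, f y ≤ ENNReal.ofReal (4 * r) ^ n * strongMaximal n f x := by
  induction n with
  | zero =>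
    refine (setLIntegral_le_lintegral _ _).trans ?_
    rw [volume_pi, Measure.pi_of_empty _ x, lintegral_dirac, pow_zero, one_mul, strongMaximal]
  | succ n ih =>
    let g (y : Fin n → ℝ) : ℝ≥0∞ := maximal volume (fun t => f (Fin.snoc y t)) (x (Fin.last n))
    calc ∫⁻ y in Metric.ball x r, f y
        = ∫⁻ y in Metric.ball (Fin.init x) r,
            ∫⁻ t in Metric.ball (x (Fin.last n)) r, f (Fin.snoc y t) :=
          setLIntegral_ball_snoc hf x hr
      _ ≤ ∫⁻ y in Metric.ball (Fin.init x) r, ENNReal.ofReal (4 * r) * g y :=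
          lintegral_mono fun y => setLIntegral_ball_le_mul_maximal _ _ hr
      _ = ENNReal.ofReal (4 * r) * ∫⁻ y in Metric.ball (Fin.init x) r, g y :=
          lintegral_const_mul' _ _ ENNReal.ofReal_ne_top
      _ ≤ ENNReal.ofReal (4 * r) * (ENNReal.ofReal (4 * r) ^ n * strongMaximal n g (Fin.init x)) :=
          mul_le_mul_right (ih (measurable_maximal_snoc hf _) _) _
      _ = _ := by rw [← mul_assoc, ← pow_succ']; rfl

lemma eucBall_subset_ball (x : Fin n → ℝ) {r : ℝ} (hr : 0 < r) :
    eucBall n x r ⊆ Metric.ball x r := by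
  intro y hy
  refine (dist_pi_lt_iff hr).2 fun i => abs_lt_of_sq_lt_sq (lt_of_le_of_lt ?_ hy) hr.le
  exact Finset.single_le_sum (f := fun i => (y i - x i) ^ 2) (fun j _ => sq_nonneg _)
    (Finset.mem_univ i)

lemma ball_subset_eucBall (x : Fin n → ℝ) {r : ℝ} (hr : 0 < r) :
    Metric.ball x (r / (n + 1)) ⊆ eucBall n x r := by
  intro y hy
  have hcoord (i : Fin n) : (y i - x i) ^ 2 ≤ (r / (n + 1)) ^ 2 :=
    sq_le_sq' (abs_lt.1 ((dist_pi_lt_iff (by positivity)).1 hy i)).1.le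
      (abs_lt.1 ((dist_pi_lt_iff (by positivity)).1 hy i)).2.le
  have hn : (n : ℝ) < (n + 1) ^ 2 := by nlinarith [Nat.cast_nonneg (α := ℝ) n]
  calc ∑ i, (y i - x i) ^ 2 ≤ n * (r / (n + 1)) ^ 2 := by
        simpa using Finset.sum_le_sum fun i (_ : i ∈ Finset.univ) => hcoord i
    _ < (n + 1) ^ 2 * (r / (n + 1)) ^ 2 := by gcongr
    _ = r ^ 2 := by field_simp

lemma centeredMax_le_mul_strongMaximal {f : (Fin n → ℝ) → ℝ≥0∞} (hf : Measurable f)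
    (x : Fin n → ℝ) :
    centeredMax n f x ≤ ENNReal.ofReal (2 * (n + 1)) ^ n * strongMaximal n f x := by
  refine iSup₂_le fun r hr => ?_
  set V := ENNReal.ofReal (2 * (r / (n + 1))) ^ n with hV
  have hV0 : V ≠ 0 := pow_ne_zero _ (ENNReal.ofReal_pos.2 (by positivity)).ne'
  have hVtop : V ≠ ∞ := ENNReal.pow_ne_top ENNReal.ofReal_ne_top
  have hvol : V ≤ volume (eucBall n x r) := by
    rw [hV, ← ENNReal.ofReal_pow (by positivity)]
    simpa [Real.volume_pi_ball x (show 0 < r / (n + 1) by positivity)]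
      using measure_mono (μ := volume) (ball_subset_eucBall x hr)
  have hsplit : ENNReal.ofReal (4 * r) ^ n = V * ENNReal.ofReal (2 * (n + 1)) ^ n := by
    rw [← mul_pow, ← ENNReal.ofReal_mul (by positivity)]
    congr 2
    field_simp
    ring
  calc (volume (eucBall n x r))⁻¹ * ∫⁻ y in eucBall n x r, f y
      ≤ V⁻¹ * (ENNReal.ofReal (4 * r) ^ n * strongMaximal n f x) :=
        mul_le_mul' (ENNReal.inv_le_inv.2 hvol)
          ((lintegral_mono_set (eucBall_subset_ball x hr)).trans
            (setLIntegral_ball_le_mul_strongMaximal hf x hr))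
    _ = _ := by rw [hsplit, mul_assoc, ENNReal.inv_mul_cancel_left hV0 hVtop]

end strongMaximal

theorem mixedHerz_HL_bounded_general {n : ℕ} (α : Fin n → ℝ) {p q : Fin n → ℝ≥0∞}
    (hp : ∀ i, p i ∈ Set.Ioo 1 ∞) (hq : ∀ i, q i ∈ Set.Ioo 1 ∞)
    (hα : ∀ i, α i ∈ Set.Ioo (-(q i).toReal⁻¹) (1 - (q i).toReal⁻¹)) :
    ∃ C : ℝ≥0∞, 0 < C ∧ C ≠ ∞ ∧ ∀ f : (Fin n → ℝ) → ℝ≥0∞, Measurable f →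
      mixedHerzNormE n α p q (centeredMax n f) ≤ C * mixedHerzNormE n α p q f := by
  obtain ⟨C, hC, hstrong⟩ := exists_mixedHerzNormE_strongMaximal_le α hp hq hα
  set D := ENNReal.ofReal (2 * (n + 1)) ^ n
  have hD : D ≠ ∞ := ENNReal.pow_ne_top ENNReal.ofReal_ne_top
  refine ⟨D * C + 1, by simp, by finiteness, fun f hf => ?_⟩
  calc mixedHerzNormE n α p q (centeredMax n f)
      ≤ mixedHerzNormE n α p q fun x => D * strongMaximal n f x :=
        mixedHerzNormE_mono α p q (centeredMax_le_mul_strongMaximal hf)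
    _ = D * mixedHerzNormE n α p q (strongMaximal n f) :=
        mixedHerzNormE_const_mul α (fun i => (zero_lt_one.trans (hp i).1).ne')
          (fun i => (zero_lt_one.trans (hq i).1).ne') hD _
    _ ≤ D * (C * mixedHerzNormE n α p q f) := mul_le_mul_right (hstrong f hf) D
    _ ≤ (D * C + 1) * mixedHerzNormE n α p q f := by
        rw [← mul_assoc]
        exact mul_le_mul_left le_self_add _

/-- boundedness of the centered Hardy–Littlewood maximal operator. -/
theorem mixedHerz_HL_bounded (n : ℕ) (p q α : Fin n → ℝ)
    (hp : ∀ i, 1 < p i) (hq : ∀ i, 1 < q i)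
    (hα : ∀ i, -(1 / q i) < α i ∧ α i < 1 - 1 / q i) :
    ∃ C : ℝ≥0∞, 0 < C ∧ C ≠ ∞ ∧ ∀ f : (Fin n → ℝ) → ℂ, Measurable f →
      mixedHerzNormE n α (fun i => ENNReal.ofReal (p i)) (fun i => ENNReal.ofReal (q i))
          (centeredMax n fun y => (‖f y‖₊ : ℝ≥0∞)) ≤
        C * herzNormC n α (fun i => ENNReal.ofReal (p i)) (fun i => ENNReal.ofReal (q i)) f := by
  obtain ⟨C, hC0, hC, h⟩ := mixedHerz_HL_bounded_general (p := fun i => ENNReal.ofReal (p i))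
    (q := fun i => ENNReal.ofReal (q i)) α (fun i => by simp [hp]) (fun i => by simp [hq])
    fun i => by simpa [ENNReal.toReal_ofReal (zero_le_one.trans (hq i).le)] using hα i
  exact ⟨C, hC0, hC, fun f hf => h _ hf.enorm⟩
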